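/- Homogeneous Strichartz estimate on homogeneous trees: let Q ≥ 2 be an integer, let T be a homogeneous tree of degree Q+1, let 0 < α ≤ 2, and let (p, q) be an admissible pair, i.e. (1/p, 1/q) ∈ [0, 1/2] × [0, 1/2) ∪ {(0, 1/2)}. Then there exists a constant C > 0 such that for every f ∈ ℓ²(T): ‖ t ↦ ‖e^{it(−Δ)^{α/2}} f‖_{ℓ^{q}(T)} ‖_{L^{p}(ℝ)} ≤ C·‖f‖_{ℓ²(T)}. -/

import Mathlib

open MeasureTheory
open scoped ENNReal

/-!
With `γ₀ = 2√Q / (Q + 1)`, the Laplacian is `Δ = γ₀ X - 1` for a self-adjoint contraction `X`, so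
the group is `e^{i t ψ(X)}` where `ψ(x) = (1 - γ₀ x)^{α/2}` is smooth and has no critical point on
`[-1, 1]`. Expand it in Chebyshev polynomials `Uₙ(X)` of the second kind. On the one hand, `Uₙ(X)`
has a convolution kernel bounded by `Q^{-n/2}`, because of the exponential growth of the tree, and
norm at most `n + 1` on `ℓ²`; interpolation shows that it maps `ℓ^{q'}` to `ℓ^q` with a norm which
decays exponentially in `n` for every `q > 2`. On the other hand, two integrations by parts bound
the coefficients by `|t|^{-4/3} (n + 1)²`. Hence `e^{i t ψ(X)}` maps `ℓ^{q'}` to `ℓ^q` with norm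
`O(|t|^{-4/3})`, which is summable along the integers, and the `TT*` argument over `s + ℤ` gives an
`L²` bound in discrete time, uniformly in `s`. Averaging over `s ∈ (0, 1]` gives continuous time.
Exponents `p > 2` are covered by `ℓ² ⊆ ℓ^p` on `s + ℤ`.
-/

section Tree

variable {V : Type*} {G : SimpleGraph V}

theorem exists_adj_dist_add_one_eq (hG : G.IsTree) {x y : V} (hxy : x ≠ y) :
    ∃ z, G.Adj x z ∧ G.dist z y + 1 = G.dist x y ∧
      ∀ z', G.Adj x z' → z' ≠ z → G.dist z' y = G.dist x y + 1 := by
  have dist_adj : ∀ z, G.Adj x z →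
      G.dist x y = G.dist z y + 1 ∨ G.dist z y = G.dist x y + 1 := fun z hz => by
    simpa only [G.dist_comm (u := y)] using hG.dist_eq_dist_add_one_of_adj y hz
  obtain ⟨p, hp, hpl⟩ := hG.connected.exists_path_of_dist x y
  cases p with
  | nil => exact absurd rfl hxy
  | @cons _ z _ hz p =>
    have closer_unique : ∀ z', G.Adj x z' → G.dist x y = G.dist z' y + 1 → z' = z := by
      intro z' hz' hd
      obtain ⟨p', -, hpl'⟩ := hG.connected.exists_path_of_dist z' y
      have hp' : (SimpleGraph.Walk.cons hz' p').IsPath :=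
        SimpleGraph.Walk.isPath_of_length_eq_dist _ (by
          rw [SimpleGraph.Walk.length_cons, hpl', hd])
      have hcons := (hG.existsUnique_path x y).unique hp hp'
      simp only [SimpleGraph.Walk.cons.injEq] at hcons
      exact hcons.1.symm
    have hzy : G.dist z y + 1 = G.dist x y := by
      have hle : G.dist z y ≤ p.length := SimpleGraph.dist_le p
      rw [SimpleGraph.Walk.length_cons] at hpl
      have := dist_adj z hz
      omega
    exact ⟨z, hz, hzy, fun z' hz' hne =>
      (dist_adj z' hz').resolve_left fun h => hne (closer_unique z' hz' h)⟩

variable [G.LocallyFinite] {Q : ℕ} {R : Type*} [Semiring R]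

theorem sum_neighborFinset_dist_self (hdeg : G.IsRegularOfDegree (Q + 1)) (F : ℕ → R) (x : V) :
    ∑ z ∈ G.neighborFinset x, F (G.dist z x) = ((Q : R) + 1) * F 1 := by
  have hF : ∀ z ∈ G.neighborFinset x, F (G.dist z x) = F 1 := fun z hz => by
    rw [SimpleGraph.dist_eq_one_iff_adj.2 ((G.mem_neighborFinset x z).1 hz).symm]
  rw [Finset.sum_congr rfl hF, Finset.sum_const, SimpleGraph.card_neighborFinset_eq_degree,
    hdeg.degree_eq, nsmul_eq_mul, Nat.cast_add_one]

theorem sum_neighborFinset_dist_of_dist_eq_succ (hG : G.IsTree)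
    (hdeg : G.IsRegularOfDegree (Q + 1)) (F : ℕ → R) {x y : V} {d : ℕ}
    (hd : G.dist x y = d + 1) :
    ∑ z ∈ G.neighborFinset x, F (G.dist z y) = F d + (Q : R) * F (d + 2) := by
  classical
  obtain ⟨z, hz, hzy, hfar⟩ := exists_adj_dist_add_one_eq hG (x := x) (y := y) (by
    rintro rfl
    simp at hd)
  have hF : ∀ z' ∈ (G.neighborFinset x).erase z, F (G.dist z' y) = F (d + 2) := fun z' hz' => by
    rw [Finset.mem_erase, SimpleGraph.mem_neighborFinset] at hz'
    rw [hfar z' hz'.2 hz'.1, hd]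
  have hmem : z ∈ G.neighborFinset x := (G.mem_neighborFinset x z).2 hz
  rw [← Finset.add_sum_erase _ _ hmem, Finset.sum_congr rfl hF, Finset.sum_const,
    Finset.card_erase_of_mem hmem, SimpleGraph.card_neighborFinset_eq_degree, hdeg.degree_eq,
    nsmul_eq_mul, Nat.add_sub_cancel, show G.dist z y = d by omega]

/-- The value at distance `d` of the convolution kernel of `U n (X)` on a homogeneous tree of
degree `Q + 1`, where `X` is the normalized adjacency operator and `r = 1 / √Q`. -/
def treeChebyshevKernel (r : ℝ) (n d : ℕ) : ℝ :=
  if d ≤ n ∧ Even (n + d) then r ^ n else 0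

theorem treeChebyshevKernel_zero_succ (r : ℝ) (d : ℕ) : treeChebyshevKernel r 0 (d + 1) = 0 := by
  simp [treeChebyshevKernel]

theorem treeChebyshevKernel_succ_succ (r : ℝ) (n d : ℕ) :
    treeChebyshevKernel r (n + 1) (d + 1) = r * treeChebyshevKernel r n d := by
  have h : n + 1 + (d + 1) = n + d + 2 := by ring
  simp only [treeChebyshevKernel, h, Nat.even_add, even_two, iff_true, Nat.add_le_add_iff_right,
    mul_ite, mul_zero, pow_succ']

theorem treeChebyshevKernel_add_two_zero (r : ℝ) (n : ℕ) :
    treeChebyshevKernel r (n + 2) 0 = r ^ 2 * treeChebyshevKernel r n 0 := by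
  simp [treeChebyshevKernel, Nat.even_add, pow_add, mul_comm]

theorem treeChebyshevKernel_nonneg {r : ℝ} (hr : 0 ≤ r) (n d : ℕ) :
    0 ≤ treeChebyshevKernel r n d := by
  unfold treeChebyshevKernel
  split_ifs <;> positivity

theorem treeChebyshevKernel_le {r : ℝ} (hr : 0 ≤ r) (n d : ℕ) :
    treeChebyshevKernel r n d ≤ r ^ n := by
  unfold treeChebyshevKernel
  split_ifs
  exacts [le_rfl, by positivity]

theorem sum_neighborFinset_treeChebyshevKernel_zero (hG : G.IsTree)
    (hdeg : G.IsRegularOfDegree (Q + 1)) (r : ℝ) (x y : V) :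
    r * ∑ z ∈ G.neighborFinset x, treeChebyshevKernel r 0 (G.dist z y) =
      treeChebyshevKernel r 1 (G.dist x y) := by
  rcases hd : G.dist x y with _ | d
  · obtain rfl := hG.connected.dist_eq_zero_iff.1 hd
    rw [sum_neighborFinset_dist_self hdeg, treeChebyshevKernel_zero_succ]
    simp [treeChebyshevKernel]
  · rw [sum_neighborFinset_dist_of_dist_eq_succ hG hdeg _ hd, treeChebyshevKernel_succ_succ,
      treeChebyshevKernel_zero_succ, mul_zero, add_zero]

theorem sum_neighborFinset_treeChebyshevKernel_succ (hG : G.IsTree)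
    (hdeg : G.IsRegularOfDegree (Q + 1)) {r : ℝ} (hr : r ^ 2 * Q = 1) (n : ℕ) (x y : V) :
    r * ∑ z ∈ G.neighborFinset x, treeChebyshevKernel r (n + 1) (G.dist z y) =
      treeChebyshevKernel r (n + 2) (G.dist x y) + treeChebyshevKernel r n (G.dist x y) := by
  rcases hd : G.dist x y with _ | d
  · obtain rfl := hG.connected.dist_eq_zero_iff.1 hd
    rw [sum_neighborFinset_dist_self hdeg, treeChebyshevKernel_succ_succ,
      treeChebyshevKernel_add_two_zero]
    linear_combination treeChebyshevKernel r n 0 * hr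
  · rw [sum_neighborFinset_dist_of_dist_eq_succ hG hdeg _ hd, treeChebyshevKernel_succ_succ,
      treeChebyshevKernel_succ_succ]
    linear_combination treeChebyshevKernel r n (d + 1) * hr

end Tree

section SchurTest

open scoped lp

variable {V : Type*} {G : SimpleGraph V} [G.LocallyFinite] {w : V → ℝ} {μ : ℝ}

theorem sum_neighborFinset_sq_le (hw : ∀ x, 0 < w x)
    (hμ : ∀ x, ∑ y ∈ G.neighborFinset x, w y ≤ μ * w x) (a : V → ℝ) (x : V) :
    (∑ y ∈ G.neighborFinset x, a y) ^ 2 ≤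
      μ * ∑ y ∈ G.neighborFinset x, w x / w y * a y ^ 2 := by
  have cauchy_schwarz : (∑ y ∈ G.neighborFinset x, a y) ^ 2 ≤
      (∑ y ∈ G.neighborFinset x, w y) * ∑ y ∈ G.neighborFinset x, a y ^ 2 / w y :=
    Finset.sum_sq_le_sum_mul_sum_of_sq_le_mul _ (fun y _ => (hw y).le)
      (fun y _ => div_nonneg (sq_nonneg _) (hw y).le)
      (fun y _ => (mul_div_cancel₀ _ (hw y).ne').ge)
  calc (∑ y ∈ G.neighborFinset x, a y) ^ 2
      ≤ μ * w x * ∑ y ∈ G.neighborFinset x, a y ^ 2 / w y :=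
        cauchy_schwarz.trans (mul_le_mul_of_nonneg_right (hμ x)
          (Finset.sum_nonneg fun y _ => div_nonneg (sq_nonneg _) (hw y).le))
    _ = μ * ∑ y ∈ G.neighborFinset x, w x / w y * a y ^ 2 := by
        rw [mul_assoc, Finset.mul_sum (a := w x)]
        simp only [div_mul_eq_mul_div, mul_div_assoc]

theorem sum_sum_neighborFinset_weight_le [DecidableEq V] (hw : ∀ x, 0 < w x)
    (hμ : ∀ x, ∑ y ∈ G.neighborFinset x, w y ≤ μ * w x) {b : V → ℝ} (hb : ∀ x, 0 ≤ b x)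
    (F : Finset V) :
    ∑ x ∈ F, ∑ y ∈ G.neighborFinset x, w x / w y * b y ≤
      μ * ∑ y ∈ F.biUnion (fun x => G.neighborFinset x), b y := by
  calc ∑ x ∈ F, ∑ y ∈ G.neighborFinset x, w x / w y * b y
      = ∑ y ∈ F.biUnion (fun x => G.neighborFinset x), ∑ x ∈ F ∩ G.neighborFinset y,
          w x / w y * b y := by
        refine Finset.sum_comm' fun x y => ?_
        simp only [SimpleGraph.mem_neighborFinset, Finset.mem_inter, Finset.mem_biUnion,
          G.adj_comm y x]
        exact ⟨fun ⟨hx, hxy⟩ => ⟨⟨hx, hxy⟩, x, hx, hxy⟩, fun ⟨h, _⟩ => h⟩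
    _ ≤ ∑ y ∈ F.biUnion (fun x => G.neighborFinset x), μ * b y := by
        refine Finset.sum_le_sum fun y _ => ?_
        rw [← Finset.sum_mul, ← Finset.sum_div]
        refine mul_le_mul_of_nonneg_right ((div_le_iff₀ (hw y)).2 (le_trans ?_ (hμ y))) (hb y)
        exact Finset.sum_le_sum_of_subset_of_nonneg Finset.inter_subset_right
          fun x _ _ => (hw x).le
    _ = μ * ∑ y ∈ F.biUnion (fun x => G.neighborFinset x), b y := (Finset.mul_sum _ _ _).symm

theorem opNorm_le_of_sum_neighborFinset_weight_le {𝕜 : Type*} [RCLike 𝕜]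
    {X : ℓ²(V, 𝕜) →L[𝕜] ℓ²(V, 𝕜)} {c : 𝕜}
    (hX : ∀ f x, X f x = c * ∑ y ∈ G.neighborFinset x, f y) (hw : ∀ x, 0 < w x) (hμ0 : 0 ≤ μ)
    (hμ : ∀ x, ∑ y ∈ G.neighborFinset x, w y ≤ μ * w x) : ‖X‖ ≤ ‖c‖ * μ := by
  classical
  refine X.opNorm_le_bound (by positivity) fun f =>
    lp.norm_le_of_forall_sum_le (by norm_num) (by positivity) fun F => ?_
  have hpt : ∀ x, ‖X f x‖ ^ 2 ≤
      ‖c‖ ^ 2 * (μ * ∑ y ∈ G.neighborFinset x, w x / w y * ‖f y‖ ^ 2) := fun x => by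
    rw [hX, norm_mul, mul_pow]
    gcongr
    exact (pow_le_pow_left₀ (norm_nonneg _) (norm_sum_le _ _) 2).trans
      (sum_neighborFinset_sq_le hw hμ _ x)
  have hf : ∑ y ∈ F.biUnion (fun x => G.neighborFinset x), ‖f y‖ ^ 2 ≤ ‖f‖ ^ 2 := by
    simpa using lp.sum_rpow_le_norm_rpow (p := 2) (by norm_num) f
      (F.biUnion fun x => G.neighborFinset x)
  simp only [ENNReal.toReal_ofNat, Real.rpow_ofNat]
  calc ∑ x ∈ F, ‖X f x‖ ^ 2
      ≤ ‖c‖ ^ 2 * (μ * ∑ x ∈ F, ∑ y ∈ G.neighborFinset x, w x / w y * ‖f y‖ ^ 2) := by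
        rw [Finset.mul_sum, Finset.mul_sum]
        exact Finset.sum_le_sum fun x _ => hpt x
    _ ≤ ‖c‖ ^ 2 * (μ * (μ * ‖f‖ ^ 2)) := by
        gcongr
        exact (sum_sum_neighborFinset_weight_le hw hμ (fun _ => by positivity) F).trans
          (by gcongr)
    _ = (‖c‖ * μ * ‖f‖) ^ 2 := by ring

end SchurTest

section NormalizedAdjacency

open Polynomial Polynomial.Chebyshev
open scoped lp

variable {V : Type*} {G : SimpleGraph V} [G.LocallyFinite] {Q : ℕ} {X : ℓ²(V, ℂ) →L[ℂ] ℓ²(V, ℂ)}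

/-- `X` is the adjacency operator of `G` divided by `2√Q`. This normalization puts the
`ℓ²`-spectrum of a homogeneous tree of degree `Q + 1` into `[-1, 1]`, where the Chebyshev
polynomials live. -/
def IsNormalizedAdjacency (G : SimpleGraph V) [G.LocallyFinite] (Q : ℕ)
    (X : ℓ²(V, ℂ) →L[ℂ] ℓ²(V, ℂ)) : Prop :=
  ∀ f x, X f x = ((2 * √(Q : ℝ))⁻¹ : ℝ) * ∑ y ∈ G.neighborFinset x, f y

theorem inv_sqrt_sq_mul_self (hQ : 0 < Q) : (√(Q : ℝ))⁻¹ ^ 2 * Q = 1 := by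
  rw [inv_pow, Real.sq_sqrt (Nat.cast_nonneg Q), inv_mul_cancel₀ (by positivity)]

theorem IsNormalizedAdjacency.norm_le_one (hX : IsNormalizedAdjacency G Q X) (hG : G.IsTree)
    (hdeg : G.IsRegularOfDegree (Q + 1)) (hQ : 0 < Q) : ‖X‖ ≤ 1 := by
  obtain ⟨o⟩ := hG.connected.nonempty
  have hr2 := inv_sqrt_sq_mul_self hQ
  set r : ℝ := (√(Q : ℝ))⁻¹ with hr
  have hr0 : 0 < r := by positivity
  have hQ1 : (1 : ℝ) ≤ Q := by exact_mod_cast hQ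
  have hweight : ∀ x, ∑ y ∈ G.neighborFinset x, r ^ G.dist y o ≤
      2 * √(Q : ℝ) * r ^ G.dist x o := fun x => by
    have hs : √(Q : ℝ) = Q * r := by
      rw [hr, ← div_eq_mul_inv, Real.div_sqrt]
    rw [hs]
    rcases hd : G.dist x o with _ | d
    · obtain rfl := hG.connected.dist_eq_zero_iff.1 hd
      rw [sum_neighborFinset_dist_self hdeg (fun d => r ^ d)]
      nlinarith
    · rw [sum_neighborFinset_dist_of_dist_eq_succ hG hdeg (fun d => r ^ d) hd]
      refine le_of_eq ?_
      linear_combination -r ^ d * hr2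
  calc ‖X‖ ≤ ‖(((2 * √(Q : ℝ))⁻¹ : ℝ) : ℂ)‖ * (2 * √(Q : ℝ)) :=
        opNorm_le_of_sum_neighborFinset_weight_le hX (fun x => pow_pos hr0 _) (by positivity)
          hweight
    _ = 1 := by
        rw [Complex.norm_of_nonneg (by positivity), inv_mul_cancel₀ (by positivity)]

theorem IsNormalizedAdjacency.two_mul_apply (hX : IsNormalizedAdjacency G Q X) (f : ℓ²(V, ℂ))
    (x : V) : 2 * X f x = ((√(Q : ℝ))⁻¹ : ℝ) * ∑ y ∈ G.neighborFinset x, f y := by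
  rw [hX, mul_inv]
  push_cast
  ring

theorem IsNormalizedAdjacency.aeval_chebyshevU_single [DecidableEq V]
    (hX : IsNormalizedAdjacency G Q X) (hG : G.IsTree) (hdeg : G.IsRegularOfDegree (Q + 1))
    (hQ : 0 < Q) (y : V) (n : ℕ) (x : V) :
    aeval X (U ℂ n) (lp.single 2 y (1 : ℂ)) x =
      treeChebyshevKernel (√(Q : ℝ))⁻¹ n (G.dist x y) := by
  have hU₀ : ∀ x, (lp.single 2 y (1 : ℂ) : ℓ²(V, ℂ)) x =
      treeChebyshevKernel (√(Q : ℝ))⁻¹ 0 (G.dist x y) := fun x => by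
    rcases eq_or_ne x y with rfl | hxy
    · simp [treeChebyshevKernel]
    · simp [treeChebyshevKernel, hxy, hG.connected.dist_eq_zero_iff]
  induction n using Nat.twoStepInduction generalizing x with
  | zero => simpa [U_zero] using hU₀ x
  | one =>
    have hU₁ : aeval X (U ℂ (1 : ℕ)) = 2 * X := by
      simp [U_one, map_ofNat (aeval X) 2]
    rw [hU₁, ← sum_neighborFinset_treeChebyshevKernel_zero hG hdeg]
    push_cast
    simp only [← hU₀]
    simpa [two_mul] using hX.two_mul_apply (lp.single 2 y 1) x
  | more n ih₀ ih₁ =>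
    have hU₂ : aeval X (U ℂ (n + 2 : ℕ)) =
        2 * X * aeval X (U ℂ (n + 1 : ℕ)) - aeval X (U ℂ n) := by
      push_cast
      simp [U_add_two, map_ofNat (aeval X) 2]
    have hK := sum_neighborFinset_treeChebyshevKernel_succ hG hdeg (inv_sqrt_sq_mul_self hQ) n x y
    rw [hU₂, eq_sub_of_add_eq hK.symm]
    push_cast
    simp only [← ih₁, ← ih₀]
    simpa [two_mul, add_mul] using hX.two_mul_apply (aeval X (U ℂ (n + 1)) (lp.single 2 y 1)) x

end NormalizedAdjacency

section SelfAdjointContraction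

open Polynomial Polynomial.Chebyshev

variable {A : Type*} [CStarAlgebra A] {a : A}

theorem re_mem_Icc_of_mem_spectrum (ha1 : ‖a‖ ≤ 1) {z : ℂ} (hz : z ∈ spectrum ℂ a) :
    z.re ∈ Set.Icc (-1) 1 := by
  rcases subsingleton_or_nontrivial A with _ | _
  · simp [spectrum.of_subsingleton] at hz
  exact abs_le.1 ((Complex.abs_re_le_norm z).trans ((spectrum.norm_le_norm_of_mem hz).trans ha1))

theorem abs_eval_chebyshevU_le {x : ℝ} (hx : |x| ≤ 1) (n : ℕ) : |(U ℝ n).eval x| ≤ n + 1 := by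
  induction n with
  | zero => simp
  | succ n ih =>
    push_cast
    rw [U_eq_X_mul_U_add_T, eval_add, eval_mul, eval_X]
    calc |x * (U ℝ n).eval x + (T ℝ (n + 1)).eval x|
        ≤ |x| * |(U ℝ n).eval x| + |(T ℝ (n + 1)).eval x| :=
          (abs_add_le _ _).trans_eq (by rw [abs_mul])
      _ ≤ 1 * (n + 1) + 1 := by
          gcongr
          exact abs_eval_T_real_le_one (n + 1 : ℤ) hx
      _ = n + 1 + 1 := by ring

theorem norm_aeval_chebyshevU_le (ha : IsSelfAdjoint a) (ha1 : ‖a‖ ≤ 1) (n : ℕ) :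
    ‖aeval a (U ℂ n)‖ ≤ n + 1 := by
  have : IsStarNormal a := ha.isStarNormal
  rw [← cfc_polynomial (U ℂ n) a]
  refine norm_cfc_le (by positivity) fun z hz => ?_
  rw [ha.mem_spectrum_eq_re hz, ← complex_ofReal_eval_U, Complex.norm_real]
  exact abs_eval_chebyshevU_le (abs_le.2 (re_mem_Icc_of_mem_spectrum ha1 hz)) n

end SelfAdjointContraction

section Interpolation

open scoped lp

theorem sum_rpow_mul_rpow_le {ι : Type*} (s : Finset ι) {θ : ℝ} (hθ : θ ∈ Set.Ioo 0 1)
    {a b : ι → ℝ} (ha : ∀ i ∈ s, 0 ≤ a i) (hb : ∀ i ∈ s, 0 ≤ b i) :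
    ∑ i ∈ s, a i ^ (1 - θ) * b i ^ θ ≤ (∑ i ∈ s, a i) ^ (1 - θ) * (∑ i ∈ s, b i) ^ θ := by
  have hθ' : 0 < 1 - θ := sub_pos.2 hθ.2
  have holder := Real.inner_le_Lp_mul_Lq_of_nonneg s
    (Real.holderConjugate_one_div hθ' hθ.1 (sub_add_cancel 1 θ))
    (fun i hi => Real.rpow_nonneg (ha i hi) (1 - θ))
    (fun i hi => Real.rpow_nonneg (hb i hi) θ)
  have cancel : ∀ {u c : ℝ}, 0 ≤ u → 0 < c → (u ^ c) ^ (1 / c) = u := fun hu hc => by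
    rw [one_div, Real.rpow_rpow_inv hu hc.ne']
  rwa [Finset.sum_congr rfl fun i hi => cancel (ha i hi) hθ',
    Finset.sum_congr rfl fun i hi => cancel (hb i hi) hθ.1, one_div_one_div,
    one_div_one_div] at holder

theorem sum_mul_kernel_le {ι : Type*} (s : Finset ι) {κ r θ : ℝ} {u k : ι → ℝ}
    (hκ : 0 ≤ κ) (hθ : θ ∈ Set.Ioo 0 1) (hr : r * (1 - θ / 2) = 1) (hu : ∀ i, 0 ≤ u i)
    (hk : ∀ i, k i ∈ Set.Icc 0 κ) :
    ∑ i ∈ s, u i * k i ≤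
      κ ^ (1 - θ) * ((∑ i ∈ s, u i ^ r) ^ (1 - θ) * (∑ i ∈ s, u i ^ (r / 2) * k i) ^ θ) := by
  obtain ⟨hθ0, hθ1⟩ := hθ
  have hr0 : 0 < r := by
    by_contra! h
    nlinarith
  have hk_split : ∀ i, k i ≤ κ ^ (1 - θ) * k i ^ θ := fun i => by
    calc k i = k i ^ (1 - θ) * k i ^ θ := by
          rw [← Real.rpow_add_of_nonneg (hk i).1 (by linarith) hθ0.le, sub_add_cancel,
            Real.rpow_one]
      _ ≤ κ ^ (1 - θ) * k i ^ θ :=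
          mul_le_mul_of_nonneg_right (Real.rpow_le_rpow (hk i).1 (hk i).2 (by linarith))
            (Real.rpow_nonneg (hk i).1 θ)
  have hu_split : ∀ i, u i = (u i ^ r) ^ (1 - θ) * (u i ^ (r / 2)) ^ θ := fun i => by
    rw [← Real.rpow_mul (hu i), ← Real.rpow_mul (hu i),
      ← Real.rpow_add_of_nonneg (hu i) (by nlinarith) (by positivity),
      show r * (1 - θ) + r / 2 * θ = 1 by linarith, Real.rpow_one]
  calc ∑ i ∈ s, u i * k i
      ≤ ∑ i ∈ s, κ ^ (1 - θ) * ((u i ^ r) ^ (1 - θ) * (u i ^ (r / 2) * k i) ^ θ) := by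
        refine Finset.sum_le_sum fun i _ => ?_
        rw [Real.mul_rpow (Real.rpow_nonneg (hu i) _) (hk i).1, ← mul_assoc ((u i ^ r) ^ (1 - θ)),
          ← hu_split, mul_left_comm]
        exact mul_le_mul_of_nonneg_left (hk_split i) (hu i)
    _ = κ ^ (1 - θ) * ∑ i ∈ s, (u i ^ r) ^ (1 - θ) * (u i ^ (r / 2) * k i) ^ θ :=
        (Finset.mul_sum _ _ _).symm
    _ ≤ _ :=
        mul_le_mul_of_nonneg_left (sum_rpow_mul_rpow_le s ⟨hθ0, hθ1⟩
            (fun i _ => Real.rpow_nonneg (hu i) _)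
            fun i _ => mul_nonneg (Real.rpow_nonneg (hu i) _) (hk i).1)
          (Real.rpow_nonneg hκ _)

variable {ι : Type*} [DecidableEq ι]

theorem norm_sum_single_sq (S : Finset ι) (a : ι → ℂ) :
    ‖(∑ x ∈ S, lp.single 2 x (a x) : ℓ²(ι, ℂ))‖ ^ 2 = ∑ x ∈ S, ‖a x‖ ^ 2 := by
  simpa using lp.norm_sum_single (p := 2) (E := fun _ : ι => ℂ) (by norm_num) a S

theorem norm_sum_single_rpow_half_le_one {S : Finset ι} {a : ι → ℂ} {r : ℝ}
    (ha : ∑ x ∈ S, ‖a x‖ ^ r ≤ 1) :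
    ‖(∑ x ∈ S, lp.single 2 x ((‖a x‖ ^ (r / 2) : ℝ) : ℂ) : ℓ²(ι, ℂ))‖ ≤ 1 := by
  rw [← sq_le_one_iff₀ (norm_nonneg _), norm_sum_single_sq]
  refine (Finset.sum_congr rfl fun x _ => ?_).trans_le ha
  rw [Complex.norm_of_nonneg (by positivity), ← Real.rpow_mul_natCast (norm_nonneg _),
    Nat.cast_two, div_mul_cancel₀ r two_ne_zero]

variable {T : ℓ²(ι, ℂ) →L[ℂ] ℓ²(ι, ℂ)} {k : ι → ι → ℝ}

theorem inner_sum_single_apply_sum_single (hT : ∀ x y, T (lp.single 2 y 1) x = k x y)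
    (S : Finset ι) (g h : ι → ℂ) :
    inner ℂ (∑ x ∈ S, lp.single 2 x (g x)) (T (∑ y ∈ S, lp.single 2 y (h y))) =
      ∑ i ∈ S ×ˢ S, (starRingEnd ℂ) (g i.1) * h i.2 * k i.1 i.2 := by
  have hTh : ∀ x y, T (lp.single 2 y (h y)) x = h y * k x y := fun x y => by
    have hsingle : (lp.single 2 y (h y) : ℓ²(ι, ℂ)) = h y • lp.single 2 y (1 : ℂ) := by
      rw [← lp.single_smul, smul_eq_mul, mul_one]
    rw [hsingle, map_smul, lp.coeFn_smul, Pi.smul_apply, hT, smul_eq_mul]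
  rw [Finset.sum_product, sum_inner]
  refine Finset.sum_congr rfl fun x _ => ?_
  rw [map_sum, inner_sum]
  refine Finset.sum_congr rfl fun y _ => ?_
  rw [lp.inner_single_left, hTh, RCLike.inner_apply]
  ring

theorem norm_inner_sum_single_le {κ M r θ : ℝ} (hκ : 0 ≤ κ) (hθ : θ ∈ Set.Ioo 0 1)
    (hr : r * (1 - θ / 2) = 1) (hT : ∀ x y, T (lp.single 2 y 1) x = k x y)
    (hk : ∀ x y, k x y ∈ Set.Icc 0 κ) (hM : ‖T‖ ≤ M) {S : Finset ι} {g h : ι → ℂ}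
    (hg : ∑ x ∈ S, ‖g x‖ ^ r ≤ 1) (hh : ∑ x ∈ S, ‖h x‖ ^ r ≤ 1) :
    ‖inner ℂ (∑ x ∈ S, lp.single 2 x (g x)) (T (∑ y ∈ S, lp.single 2 y (h y)))‖ ≤
      κ ^ (1 - θ) * M ^ θ := by
  let u : ι × ι → ℝ := fun i => ‖g i.1‖ * ‖h i.2‖
  have hu : ∀ (i : ι × ι) (s : ℝ), u i ^ s = ‖g i.1‖ ^ s * ‖h i.2‖ ^ s := fun i s =>
    Real.mul_rpow (norm_nonneg _) (norm_nonneg _)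
  have hu_r : ∑ i ∈ S ×ˢ S, u i ^ r ≤ 1 := by
    simp only [hu, Finset.sum_product, ← Finset.sum_mul_sum]
    exact mul_le_one₀ hg (by positivity) hh
  have hu_half : ∑ i ∈ S ×ˢ S, u i ^ (r / 2) * k i.1 i.2 ≤ M := by
    let v : (ι → ℂ) → ℓ²(ι, ℂ) := fun a => ∑ x ∈ S, lp.single 2 x ((‖a x‖ ^ (r / 2) : ℝ) : ℂ)
    have hsum : inner ℂ (v g) (T (v h)) =
        ((∑ i ∈ S ×ˢ S, u i ^ (r / 2) * k i.1 i.2 : ℝ) : ℂ) := by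
      simp only [v, hu, inner_sum_single_apply_sum_single hT, Complex.conj_ofReal]
      push_cast
      rfl
    calc ∑ i ∈ S ×ˢ S, u i ^ (r / 2) * k i.1 i.2
        ≤ ‖inner ℂ (v g) (T (v h))‖ := by
          rw [hsum, Complex.norm_real]
          exact Real.le_norm_self _
      _ ≤ ‖v g‖ * (‖T‖ * ‖v h‖) :=
          (norm_inner_le_norm _ _).trans (by gcongr; exact T.le_opNorm _)
      _ ≤ 1 * (M * 1) := by
          have hM0 : 0 ≤ M := (norm_nonneg _).trans hM
          gcongr
          exacts [norm_sum_single_rpow_half_le_one hg, norm_sum_single_rpow_half_le_one hh]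
      _ = M := by rw [one_mul, mul_one]
  calc ‖inner ℂ (∑ x ∈ S, lp.single 2 x (g x)) (T (∑ y ∈ S, lp.single 2 y (h y)))‖
      ≤ ∑ i ∈ S ×ˢ S, u i * k i.1 i.2 := by
        rw [inner_sum_single_apply_sum_single hT]
        refine (norm_sum_le _ _).trans_eq (Finset.sum_congr rfl fun i _ => ?_)
        rw [norm_mul, norm_mul, RCLike.norm_conj, Complex.norm_of_nonneg (hk _ _).1]
    _ ≤ κ ^ (1 - θ) * ((∑ i ∈ S ×ˢ S, u i ^ r) ^ (1 - θ) *
          (∑ i ∈ S ×ˢ S, u i ^ (r / 2) * k i.1 i.2) ^ θ) :=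
        sum_mul_kernel_le _ hκ hθ hr (fun i => by positivity) fun i => hk i.1 i.2
    _ ≤ κ ^ (1 - θ) * (1 ^ (1 - θ) * M ^ θ) := by
        have hθ1 : 0 ≤ 1 - θ := (sub_pos.2 hθ.2).le
        have hsum0 : 0 ≤ ∑ i ∈ S ×ˢ S, u i ^ (r / 2) * k i.1 i.2 :=
          Finset.sum_nonneg fun i _ => mul_nonneg (by positivity) (hk _ _).1
        have hθ0 : 0 ≤ θ := hθ.1.le
        gcongr
    _ = κ ^ (1 - θ) * M ^ θ := by rw [Real.one_rpow, one_mul]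

end Interpolation

section ChebyshevExpansion

open Polynomial Polynomial.Chebyshev

theorem span_range_chebyshevU : Submodule.span ℂ (Set.range fun n : ℕ => U ℂ n) = ⊤ := by
  let S : Polynomial.Sequence ℂ := ⟨fun n => U ℂ n, fun n => degree_U_natCast ℂ n⟩
  exact S.span fun n => (leadingCoeff_ne_zero.2 (S.ne_zero n)).isUnit

/-- The coefficients of a function on `[-1, 1]` with respect to the Chebyshev polynomials of the
second kind, written in the angular variable `x = cos θ`. -/
noncomputable def chebyshevUCoeff (F : ℝ → ℂ) (n : ℕ) : ℂ :=
  (2 / Real.pi : ℝ) *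
    ∫ θ in (0 : ℝ)..Real.pi, F (Real.cos θ) * (Real.sin θ * Real.sin ((n + 1) * θ) : ℝ)

theorem integral_cos_int_mul {k : ℤ} (hk : k ≠ 0) :
    ∫ θ in (0 : ℝ)..Real.pi, Real.cos (k * θ) = 0 := by
  rw [intervalIntegral.integral_comp_mul_left _ (Int.cast_ne_zero.2 hk)]
  simp

theorem integral_sin_mul_sin (m n : ℕ) :
    ∫ θ in (0 : ℝ)..Real.pi, Real.sin ((m + 1) * θ) * Real.sin ((n + 1) * θ) =
      if n = m then Real.pi / 2 else 0 := by
  have product_to_sum : ∀ θ : ℝ, Real.sin ((m + 1) * θ) * Real.sin ((n + 1) * θ) =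
      2⁻¹ * Real.cos (((m - n : ℤ) : ℝ) * θ) - 2⁻¹ * Real.cos (((m + n + 2 : ℤ) : ℝ) * θ) := by
    intro θ
    have hsub : ((m - n : ℤ) : ℝ) * θ = (m + 1) * θ - (n + 1) * θ := by push_cast; ring
    have hadd : ((m + n + 2 : ℤ) : ℝ) * θ = (m + 1) * θ + (n + 1) * θ := by push_cast; ring
    rw [hsub, hadd, Real.cos_sub, Real.cos_add]
    ring
  have hint : ∀ k : ℤ, IntervalIntegrable (fun θ => 2⁻¹ * Real.cos (k * θ)) volume 0 Real.pi :=
    fun k => Continuous.intervalIntegrable (by fun_prop) _ _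
  simp only [product_to_sum]
  rw [intervalIntegral.integral_sub (hint _) (hint _), intervalIntegral.integral_const_mul,
    intervalIntegral.integral_const_mul, integral_cos_int_mul (k := m + n + 2) (by omega)]
  split_ifs with hmn
  · subst hmn
    simp [inv_mul_eq_div]
  · rw [integral_cos_int_mul (by omega), mul_zero, sub_zero]

theorem chebyshevUCoeff_eval_U (m n : ℕ) :
    chebyshevUCoeff (fun x => (U ℂ m).eval (x : ℂ)) n = if n = m then 1 else 0 := by
  have integrand_eq : ∀ θ : ℝ,
      (U ℂ m).eval (Real.cos θ : ℂ) * (Real.sin θ * Real.sin ((n + 1) * θ) : ℝ) =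
        ((Real.sin ((m + 1) * θ) * Real.sin ((n + 1) * θ) : ℝ) : ℂ) := by
    intro θ
    rw [← complex_ofReal_eval_U, ← Complex.ofReal_mul, ← mul_assoc, U_real_cos, Int.cast_natCast]
  simp only [chebyshevUCoeff, integrand_eq]
  rw [intervalIntegral.integral_ofReal, integral_sin_mul_sin, ← Complex.ofReal_mul]
  split_ifs
  · rw [div_mul_div_cancel₀' two_ne_zero, div_self Real.pi_ne_zero, Complex.ofReal_one]
  · rw [mul_zero, Complex.ofReal_zero]

theorem intervalIntegrable_chebyshevUCoeff {F : ℝ → ℂ} (hF : ContinuousOn F (Set.Icc (-1) 1))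
    (n : ℕ) :
    IntervalIntegrable
      (fun θ => F (Real.cos θ) * (Real.sin θ * Real.sin ((n + 1) * θ) : ℝ)) volume 0 Real.pi :=
  ((hF.comp_continuous Real.continuous_cos Real.cos_mem_Icc).mul
    (by fun_prop)).intervalIntegrable _ _

theorem chebyshevUCoeff_add {F H : ℝ → ℂ} (hF : ContinuousOn F (Set.Icc (-1) 1))
    (hH : ContinuousOn H (Set.Icc (-1) 1)) (n : ℕ) :
    chebyshevUCoeff (fun x => F x + H x) n = chebyshevUCoeff F n + chebyshevUCoeff H n := by
  simp only [chebyshevUCoeff, add_mul (F _)]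
  rw [intervalIntegral.integral_add (intervalIntegrable_chebyshevUCoeff hF n)
    (intervalIntegrable_chebyshevUCoeff hH n), mul_add]

theorem chebyshevUCoeff_const_mul (c : ℂ) (F : ℝ → ℂ) (n : ℕ) :
    chebyshevUCoeff (fun x => c * F x) n = c * chebyshevUCoeff F n := by
  simp only [chebyshevUCoeff, mul_assoc]
  rw [intervalIntegral.integral_const_mul, mul_left_comm]

theorem norm_chebyshevUCoeff_le {F : ℝ → ℂ} {c : ℝ} (hF : ∀ x ∈ Set.Icc (-1 : ℝ) 1, ‖F x‖ ≤ c)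
    (n : ℕ) : ‖chebyshevUCoeff F n‖ ≤ 2 * c := by
  have hint : ‖∫ θ in (0 : ℝ)..Real.pi,
      F (Real.cos θ) * (Real.sin θ * Real.sin ((n + 1) * θ) : ℝ)‖ ≤ c * |Real.pi - 0| :=
    intervalIntegral.norm_integral_le_of_norm_le_const fun θ _ => by
      rw [norm_mul, Complex.norm_real, norm_mul]
      exact (mul_le_of_le_one_right (norm_nonneg _)
        (mul_le_one₀ (Real.abs_sin_le_one _) (norm_nonneg _) (Real.abs_sin_le_one _))).trans
          (hF _ (Real.cos_mem_Icc θ))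
  rw [sub_zero, abs_of_pos Real.pi_pos] at hint
  rw [chebyshevUCoeff, norm_mul, Complex.norm_of_nonneg (by positivity)]
  calc _ ≤ 2 / Real.pi * (c * Real.pi) := by gcongr
    _ = 2 * c := by field_simp

theorem norm_chebyshevUCoeff_sub_le {F H : ℝ → ℂ} (hF : ContinuousOn F (Set.Icc (-1) 1))
    (hH : ContinuousOn H (Set.Icc (-1) 1)) {ε : ℝ}
    (hFH : ∀ x ∈ Set.Icc (-1 : ℝ) 1, ‖F x - H x‖ ≤ ε) (n : ℕ) :
    ‖chebyshevUCoeff F n - chebyshevUCoeff H n‖ ≤ 2 * ε := by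
  rw [sub_eq_add_neg, ← neg_one_mul, ← chebyshevUCoeff_const_mul,
    ← chebyshevUCoeff_add hF (by fun_prop)]
  refine norm_chebyshevUCoeff_le (fun x hx => ?_) n
  rw [neg_one_mul, ← sub_eq_add_neg]
  exact hFH x hx

theorem continuous_eval_ofReal (P : ℂ[X]) : Continuous fun x : ℝ => P.eval (x : ℂ) :=
  P.continuous.comp Complex.continuous_ofReal

theorem hasSum_chebyshevUCoeff_smul {E : Type*} [AddCommGroup E] [Module ℂ E] [TopologicalSpace E]
    [ContinuousAdd E] [ContinuousConstSMul ℂ E] (ℓ : ℂ[X] →ₗ[ℂ] E) (P : ℂ[X]) :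
    HasSum (fun n => chebyshevUCoeff (fun x => P.eval (x : ℂ)) n • ℓ (U ℂ n)) (ℓ P) := by
  have hP : P ∈ Submodule.span ℂ (Set.range fun n : ℕ => U ℂ n) :=
    span_range_chebyshevU ▸ Submodule.mem_top
  induction hP using Submodule.span_induction with
  | mem P hP =>
    obtain ⟨m, rfl⟩ := hP
    simp only [chebyshevUCoeff_eval_U, ite_smul, one_smul, zero_smul]
    simpa using hasSum_single (f := fun n : ℕ => if n = m then ℓ (U ℂ n) else 0) m
      fun n hn => if_neg hn
  | zero => simp [chebyshevUCoeff]
  | add P R _ _ hP hR =>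
    simp only [eval_add, chebyshevUCoeff_add (continuous_eval_ofReal P).continuousOn
      (continuous_eval_ofReal R).continuousOn, add_smul, map_add]
    exact hP.add hR
  | smul c P _ hP =>
    simp only [eval_smul, smul_eq_mul, chebyshevUCoeff_const_mul, mul_smul, map_smul]
    exact hP.const_smul c

theorem exists_complex_polynomial_near {F : ℝ → ℂ} {a b : ℝ} (hF : ContinuousOn F (Set.Icc a b))
    {ε : ℝ} (hε : 0 < ε) : ∃ P : ℂ[X], ∀ x ∈ Set.Icc a b, ‖P.eval (x : ℂ) - F x‖ ≤ ε := by
  obtain ⟨p, hp⟩ := exists_polynomial_near_of_continuousOn a b (fun x => (F x).re)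
    (Complex.continuous_re.comp_continuousOn hF) (ε / 2) (half_pos hε)
  obtain ⟨r, hr⟩ := exists_polynomial_near_of_continuousOn a b (fun x => (F x).im)
    (Complex.continuous_im.comp_continuousOn hF) (ε / 2) (half_pos hε)
  refine ⟨p.map (algebraMap ℝ ℂ) + C Complex.I * r.map (algebraMap ℝ ℂ), fun x hx => ?_⟩
  have heval : ∀ s : ℝ[X], (s.map (algebraMap ℝ ℂ)).eval (x : ℂ) = (s.eval x : ℝ) := fun s => by
    rw [eval_map, ← Complex.coe_algebraMap, eval₂_at_apply]
  calc _ ≤ |p.eval x - (F x).re| + |r.eval x - (F x).im| := by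
        refine (Complex.norm_le_abs_re_add_abs_im _).trans_eq ?_
        simp [heval]
    _ ≤ ε / 2 + ε / 2 := add_le_add (hp x hx).le (hr x hx).le
    _ = ε := add_halves ε

variable {A : Type*} [CStarAlgebra A] {a : A} {F : ℝ → ℂ}

theorem continuousOn_comp_re_spectrum (ha1 : ‖a‖ ≤ 1) (hF : ContinuousOn F (Set.Icc (-1) 1)) :
    ContinuousOn (fun z : ℂ => F z.re) (spectrum ℂ a) :=
  hF.comp Complex.continuous_re.continuousOn fun _ hz => re_mem_Icc_of_mem_spectrum ha1 hz

theorem norm_aeval_sub_cfc_le (ha : IsSelfAdjoint a) (ha1 : ‖a‖ ≤ 1)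
    (hF : ContinuousOn F (Set.Icc (-1) 1)) {P : ℂ[X]} {ε : ℝ}
    (hP : ∀ x ∈ Set.Icc (-1 : ℝ) 1, ‖P.eval (x : ℂ) - F x‖ ≤ ε) :
    ‖aeval a P - cfc (fun z : ℂ => F z.re) a‖ ≤ ε := by
  rw [← cfc_polynomial P a ha.isStarNormal,
    ← cfc_sub P.eval _ a P.continuousOn (continuousOn_comp_re_spectrum ha1 hF)]
  refine norm_cfc_le ((norm_nonneg _).trans (hP 0 (by simp))) fun z hz => ?_
  rw [ha.mem_spectrum_eq_re hz, Complex.ofReal_re]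
  exact hP _ (re_mem_Icc_of_mem_spectrum ha1 hz)

theorem map_cfc_eq_tsum_chebyshevUCoeff (ha : IsSelfAdjoint a) (ha1 : ‖a‖ ≤ 1)
    (hF : ContinuousOn F (Set.Icc (-1) 1)) (Λ : A →L[ℂ] ℂ)
    (hΛ : Summable fun n : ℕ => ‖Λ (aeval a (U ℂ n))‖) :
    Λ (cfc (fun z : ℂ => F z.re) a) = ∑' n : ℕ, chebyshevUCoeff F n * Λ (aeval a (U ℂ n)) := by
  choose P hP using fun k : ℕ => exists_complex_polynomial_near hF (Nat.one_div_pos_of_nat (n := k))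
  let c : ℕ → ℕ → ℂ := fun k => chebyshevUCoeff fun x => (P k).eval (x : ℂ)
  have hc : ∀ k n, ‖c k n - chebyshevUCoeff F n‖ ≤ 2 * (1 / ((k : ℝ) + 1)) := fun k =>
    norm_chebyshevUCoeff_sub_le (continuous_eval_ofReal _).continuousOn hF (hP k)
  have htendsto : Filter.Tendsto (fun k : ℕ => 1 / ((k : ℝ) + 1)) Filter.atTop (nhds 0) :=
    tendsto_one_div_add_atTop_nhds_zero_nat
  have hexp : ∀ k, ∑' n : ℕ, c k n * Λ (aeval a (U ℂ n)) = Λ (aeval a (P k)) := fun k =>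
    (hasSum_chebyshevUCoeff_smul (Λ.toLinearMap ∘ₗ (aeval a).toLinearMap) (P k)).tsum_eq
  have hΛP : Filter.Tendsto (fun k => Λ (aeval a (P k))) Filter.atTop
      (nhds (Λ (cfc (fun z : ℂ => F z.re) a))) :=
    (Λ.continuous.tendsto _).comp (tendsto_iff_norm_sub_tendsto_zero.2 (squeeze_zero
      (fun _ => norm_nonneg _) (fun k => norm_aeval_sub_cfc_le ha ha1 hF (hP k)) htendsto))
  obtain ⟨B, hB⟩ := isCompact_Icc.exists_bound_of_continuousOn hF
  refine tendsto_nhds_unique hΛP ?_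
  simp only [← hexp]
  refine tendsto_tsum_of_dominated_convergence (hΛ.mul_left (2 + 2 * B)) (fun n => ?_)
    (.of_forall fun k n => ?_)
  · refine Filter.Tendsto.mul_const _ (tendsto_iff_norm_sub_tendsto_zero.2 ?_)
    exact squeeze_zero (fun _ => norm_nonneg _) (fun k => hc k n)
      (by simpa using htendsto.const_mul 2)
  · rw [norm_mul]
    have hk : 1 / ((k : ℝ) + 1) ≤ 1 := by
      rw [div_le_one (by positivity)]
      linarith [k.cast_nonneg (α := ℝ)]
    gcongr
    linarith [hc k n, norm_chebyshevUCoeff_le hB n,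
      norm_le_norm_sub_add (c k n) (chebyshevUCoeff F n)]

end ChebyshevExpansion

section OscillatoryIntegral

/-- The unimodular function `x ↦ e^{i t h(x)}`: the integrand of an oscillatory integral with phase
`h`, and also the spectral multiplier of the unitary group `e^{i t h(a)}`. -/
noncomputable def expPhase (h : ℝ → ℝ) (t x : ℝ) : ℂ :=
  Complex.exp ((t * h x : ℝ) * Complex.I)

theorem norm_expPhase (h : ℝ → ℝ) (t x : ℝ) : ‖expPhase h t x‖ = 1 :=
  Complex.norm_exp_ofReal_mul_I _

theorem continuousOn_expPhase {h : ℝ → ℝ} {s : Set ℝ} (hh : ContinuousOn h s) (t : ℝ) :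
    ContinuousOn (expPhase h t) s := by
  unfold expPhase
  fun_prop

variable {h h' : ℝ → ℝ}

theorem hasDerivAt_expPhase {x : ℝ} (hh : HasDerivAt h (h' x) x) (t : ℝ) :
    HasDerivAt (expPhase h t) (Complex.I * t * (expPhase h t x * h' x)) x := by
  refine ((hh.const_mul t).ofReal_comp.mul_const Complex.I).cexp.congr_deriv ?_
  simp only [expPhase, Complex.ofReal_mul]
  ring

theorem norm_integral_expPhase_mul_le {a b B : ℝ} (hab : a ≤ b) (h : ℝ → ℝ) (t : ℝ) {g : ℝ → ℝ}
    (hg : ∀ x ∈ Set.Icc a b, |g x| ≤ B) : ‖∫ x in a..b, expPhase h t x * g x‖ ≤ B * (b - a) := by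
  rw [← abs_of_nonneg (sub_nonneg.2 hab)]
  refine intervalIntegral.norm_integral_le_of_norm_le_const fun x hx => ?_
  rw [norm_mul, norm_expPhase, one_mul, Complex.norm_real]
  exact hg x (Set.Ioc_subset_Icc_self (Set.uIoc_of_le hab ▸ hx))

theorem mul_integral_expPhase_mul_eq {k k' : ℝ → ℝ} {a b : ℝ} (hab : a ≤ b)
    (hh : ∀ x ∈ Set.Icc a b, HasDerivAt h (h' x) x) (hh' : ContinuousOn h' (Set.Icc a b))
    (hk : ∀ x ∈ Set.Icc a b, HasDerivAt k (k' x) x) (hk' : ContinuousOn k' (Set.Icc a b)) (t : ℝ) :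
    Complex.I * t * (∫ x in a..b, expPhase h t x * (h' x * k x : ℝ)) =
      k b * expPhase h t b - k a * expPhase h t a - ∫ x in a..b, expPhase h t x * k' x := by
  rw [← Set.uIcc_of_le hab] at hh hh' hk hk'
  have hcont : ContinuousOn (expPhase h t) (Set.uIcc a b) :=
    continuousOn_expPhase (HasDerivAt.continuousOn hh) t
  have parts := intervalIntegral.integral_mul_deriv_eq_deriv_mul
    (fun x hx => (hk x hx).ofReal_comp) (fun x hx => hasDerivAt_expPhase (hh x hx) t)
    (ContinuousOn.intervalIntegrable (by fun_prop))
    (ContinuousOn.intervalIntegrable (by fun_prop))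
  simp only [mul_comm (Complex.ofReal (k' _))] at parts
  rw [← parts, ← intervalIntegral.integral_const_mul]
  refine intervalIntegral.integral_congr fun x _ => ?_
  push_cast
  ring

theorem abs_mul_norm_integral_expPhase_mul_le {k k' : ℝ → ℝ} {a b B B' : ℝ} (hab : a ≤ b)
    (hh : ∀ x ∈ Set.Icc a b, HasDerivAt h (h' x) x) (hh' : ContinuousOn h' (Set.Icc a b))
    (hk : ∀ x ∈ Set.Icc a b, HasDerivAt k (k' x) x) (hk' : ContinuousOn k' (Set.Icc a b))
    (hkB : ∀ x ∈ Set.Icc a b, |k x| ≤ B) (hk'B : ∀ x ∈ Set.Icc a b, |k' x| ≤ B') (t : ℝ) :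
    |t| * ‖∫ x in a..b, expPhase h t x * (h' x * k x : ℝ)‖ ≤ 2 * B + B' * (b - a) := by
  have boundary : ∀ x ∈ Set.Icc a b, ‖k x * expPhase h t x‖ ≤ B := fun x hx => by
    rw [norm_mul, norm_expPhase, mul_one, Complex.norm_real]
    exact hkB x hx
  calc |t| * ‖∫ x in a..b, expPhase h t x * (h' x * k x : ℝ)‖
      = ‖Complex.I * t * (∫ x in a..b, expPhase h t x * (h' x * k x : ℝ))‖ := by simp
    _ ≤ ‖k b * expPhase h t b‖ + ‖k a * expPhase h t a‖
          + ‖∫ x in a..b, expPhase h t x * k' x‖ := by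
        rw [mul_integral_expPhase_mul_eq hab hh hh' hk hk']
        exact (norm_sub_le _ _).trans (by gcongr; exact norm_sub_le _ _)
    _ ≤ B + B + B' * (b - a) := add_le_add
        (add_le_add (boundary b (Set.right_mem_Icc.2 hab)) (boundary a (Set.left_mem_Icc.2 hab)))
        (norm_integral_expPhase_mul_le hab h t hk'B)
    _ = 2 * B + B' * (b - a) := by ring

theorem abs_mul_le_mul {x y X Y : ℝ} (hx : |x| ≤ X) (hy : |y| ≤ Y) : |x * y| ≤ X * Y :=
  (abs_mul x y).trans_le (mul_le_mul hx hy (abs_nonneg y) ((abs_nonneg x).trans hx))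

theorem two_div_pi_mul_le_sin {δ θ : ℝ} (hδ : 0 ≤ δ) (hθ : θ ∈ Set.Icc δ (Real.pi - δ)) :
    2 / Real.pi * δ ≤ Real.sin θ := by
  rcases le_total θ (Real.pi / 2) with hle | hge
  · calc 2 / Real.pi * δ ≤ 2 / Real.pi * θ := by gcongr; exact hθ.1
      _ ≤ Real.sin θ := Real.mul_le_sin (hδ.trans hθ.1) hle
  · rw [← Real.sin_pi_sub]
    calc 2 / Real.pi * δ ≤ 2 / Real.pi * (Real.pi - θ) := by gcongr; linarith [hθ.2]
      _ ≤ Real.sin (Real.pi - θ) := Real.mul_le_sin (by linarith [hθ.2]) (by linarith)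

variable {f f' g : ℝ → ℝ} {t δ A : ℝ}

theorem abs_mul_norm_integral_expPhase_mul_le_of_deriv_mul_eq_sin_mul
    (hδ0 : 0 < δ) (hδ1 : δ ≤ 1) (hh : ∀ θ, HasDerivAt h (h' θ) θ) (hh' : Continuous h')
    (hf : ∀ θ, HasDerivAt f (f' θ) θ) (hf' : Continuous f')
    (hfg : ∀ θ, h' θ * f θ = Real.sin θ * g θ) (hfA : ∀ θ ∈ Set.Icc 0 Real.pi, |f θ| ≤ A)
    (hf'A : ∀ θ ∈ Set.Icc 0 Real.pi, |f' θ| ≤ A) (t : ℝ) :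
    |t| * ‖∫ θ in δ..(Real.pi - δ), expPhase h t θ * g θ‖ ≤
      (2 + 2 * Real.pi) * (A / (2 / Real.pi * δ) ^ 2) := by
  set σ : ℝ := 2 / Real.pi * δ
  have hσ0 : 0 < σ := by positivity
  have hsin : ∀ θ ∈ Set.Icc δ (Real.pi - δ), σ ≤ Real.sin θ := fun _ =>
    two_div_pi_mul_le_sin hδ0.le
  have hsin0 : ∀ θ ∈ Set.Icc δ (Real.pi - δ), 0 < Real.sin θ := fun θ hθ => hσ0.trans_le (hsin θ hθ)
  have hsub : Set.Icc δ (Real.pi - δ) ⊆ Set.Icc 0 Real.pi :=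
    Set.Icc_subset_Icc hδ0.le (sub_le_self _ hδ0.le)
  have hA : 0 ≤ A := (abs_nonneg _).trans (hfA 0 (Set.left_mem_Icc.2 Real.pi_pos.le))
  have hf_cont : Continuous f := continuous_iff_continuousAt.2 fun θ => (hf θ).continuousAt
  have hle : δ ≤ Real.pi - δ := by linarith [Real.pi_gt_three]
  have quotient_bound : ∀ θ ∈ Set.Icc δ (Real.pi - δ), |f θ / Real.sin θ| ≤ A / σ ^ 2 := by
    intro θ hθ
    have hσsin : σ ^ 2 ≤ Real.sin θ := by nlinarith [hsin θ hθ, Real.sin_le_one θ]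
    rw [abs_div, abs_of_pos (hsin0 θ hθ)]
    exact div_le_div₀ hA (hfA θ (hsub hθ)) (by positivity) hσsin
  have quotient_deriv_bound : ∀ θ ∈ Set.Icc δ (Real.pi - δ),
      |(f' θ * Real.sin θ - f θ * Real.cos θ) / Real.sin θ ^ 2| ≤ (A * 1 + A * 1) / σ ^ 2 := by
    intro θ hθ
    rw [abs_div, abs_of_nonneg (sq_nonneg (Real.sin θ))]
    refine div_le_div₀ (by positivity) ((abs_sub _ _).trans ?_) (by positivity)
      (by gcongr; exact hsin θ hθ)
    exact add_le_add (abs_mul_le_mul (hf'A θ (hsub hθ)) (Real.abs_sin_le_one θ))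
      (abs_mul_le_mul (hfA θ (hsub hθ)) (Real.abs_cos_le_one θ))
  have integrand_eq : ∀ θ ∈ Set.uIcc δ (Real.pi - δ),
      expPhase h t θ * g θ = expPhase h t θ * (h' θ * (f θ / Real.sin θ) : ℝ) := by
    intro θ hθ
    rw [Set.uIcc_of_le hle] at hθ
    rw [← mul_div_assoc, hfg, mul_div_cancel_left₀ _ (hsin0 θ hθ).ne']
  rw [intervalIntegral.integral_congr integrand_eq]
  calc _ ≤ 2 * (A / σ ^ 2) + (A * 1 + A * 1) / σ ^ 2 * (Real.pi - δ - δ) :=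
        abs_mul_norm_integral_expPhase_mul_le hle (fun θ _ => hh θ) hh'.continuousOn
          (fun θ hθ => (hf θ).fun_div (Real.hasDerivAt_sin θ) (hsin0 θ hθ).ne')
          (ContinuousOn.div (by fun_prop) (by fun_prop) fun θ hθ => (pow_pos (hsin0 θ hθ) 2).ne')
          quotient_bound quotient_deriv_bound t
    _ ≤ 2 * (A / σ ^ 2) + (A * 1 + A * 1) / σ ^ 2 * Real.pi := by gcongr; linarith
    _ = (2 + 2 * Real.pi) * (A / σ ^ 2) := by ring

-- The phase is stationary at `0` and `π`: within distance `δ = |t|^(-1/3)` of these points the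
-- trivial bound is used, and integration by parts elsewhere.
theorem norm_integral_expPhase_mul_le_of_deriv_mul_eq_sin_mul
    (hδ0 : 0 < δ) (hδ1 : δ ≤ 1) (hδt : |t| * δ ^ 3 = 1)
    (hh : ∀ θ, HasDerivAt h (h' θ) θ) (hh' : Continuous h')
    (hf : ∀ θ, HasDerivAt f (f' θ) θ) (hf' : Continuous f') (hg : Continuous g)
    (hfg : ∀ θ, h' θ * f θ = Real.sin θ * g θ) (hgA : ∀ θ ∈ Set.Icc 0 Real.pi, |g θ| ≤ A)
    (hfA : ∀ θ ∈ Set.Icc 0 Real.pi, |f θ| ≤ A) (hf'A : ∀ θ ∈ Set.Icc 0 Real.pi, |f' θ| ≤ A) :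
    ‖∫ θ in (0 : ℝ)..Real.pi, expPhase h t θ * g θ‖ ≤
      (2 + (1 + Real.pi) * Real.pi ^ 2 / 2) * A * δ := by
  have hπ := Real.pi_gt_three
  have ht : |t| = 1 / δ ^ 3 := eq_one_div_of_mul_eq_one_left hδt
  have hh_cont : Continuous h := continuous_iff_continuousAt.2 fun θ => (hh θ).continuousAt
  have integrable : ∀ a b : ℝ, IntervalIntegrable (fun θ => expPhase h t θ * g θ) volume a b := by
    unfold expPhase
    exact fun a b => Continuous.intervalIntegrable (by fun_prop) a b
  have left : ‖∫ θ in (0 : ℝ)..δ, expPhase h t θ * g θ‖ ≤ A * (δ - 0) :=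
    norm_integral_expPhase_mul_le hδ0.le h t fun θ hθ => hgA θ ⟨hθ.1, by linarith [hθ.2]⟩
  have right : ‖∫ θ in (Real.pi - δ)..Real.pi, expPhase h t θ * g θ‖ ≤
      A * (Real.pi - (Real.pi - δ)) :=
    norm_integral_expPhase_mul_le (by linarith) h t fun θ hθ => hgA θ ⟨by linarith [hθ.1], hθ.2⟩
  have middle : ‖∫ θ in δ..(Real.pi - δ), expPhase h t θ * g θ‖ ≤
      (1 + Real.pi) * Real.pi ^ 2 / 2 * A * δ := by
    refine le_of_mul_le_mul_left ((abs_mul_norm_integral_expPhase_mul_le_of_deriv_mul_eq_sin_mul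
      hδ0 hδ1 hh hh' hf hf' hfg hfA hf'A t).trans_eq ?_) (ht ▸ by positivity : 0 < |t|)
    rw [ht]
    field_simp
  rw [← intervalIntegral.integral_add_adjacent_intervals (integrable 0 (Real.pi - δ))
    (integrable _ _), ← intervalIntegral.integral_add_adjacent_intervals (integrable 0 δ)
    (integrable _ _)]
  calc _ ≤ A * (δ - 0) + (1 + Real.pi) * Real.pi ^ 2 / 2 * A * δ
        + A * (Real.pi - (Real.pi - δ)) := norm_add₃_le.trans (by gcongr)
    _ = (2 + (1 + Real.pi) * Real.pi ^ 2 / 2) * A * δ := by ring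

theorem abs_mul_add_mul_le {x y z u X Y Z U : ℝ} (hx : |x| ≤ X) (hy : |y| ≤ Y) (hz : |z| ≤ Z)
    (hu : |u| ≤ U) : |x * y + z * u| ≤ X * Y + Z * U :=
  (abs_add_le _ _).trans (add_le_add (abs_mul_le_mul hx hy) (abs_mul_le_mul hz hu))

variable {w w' w'' S S' S'' : ℝ → ℝ} {W M : ℝ}

theorem abs_mul_norm_integral_expPhase_mul_sin_mul_eq
    (hh : ∀ θ, HasDerivAt h (h' θ) θ) (hh' : Continuous h') (hw : ∀ θ, HasDerivAt w (w' θ) θ)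
    (hw' : Continuous w') (hhw : ∀ θ, h' θ * w θ = Real.sin θ) (hS : ∀ θ, HasDerivAt S (S' θ) θ)
    (hS' : Continuous S') (hS0 : S 0 = 0) (hSpi : S Real.pi = 0) (t : ℝ) :
    |t| * ‖∫ θ in (0 : ℝ)..Real.pi, expPhase h t θ * (Real.sin θ * S θ : ℝ)‖ =
      ‖∫ θ in (0 : ℝ)..Real.pi, expPhase h t θ * (w' θ * S θ + w θ * S' θ : ℝ)‖ := by
  have hw_cont : Continuous w := continuous_iff_continuousAt.2 fun θ => (hw θ).continuousAt
  have hS_cont : Continuous S := continuous_iff_continuousAt.2 fun θ => (hS θ).continuousAt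
  have parts := mul_integral_expPhase_mul_eq Real.pi_pos.le (fun θ _ => hh θ) hh'.continuousOn
    (fun θ _ => (hw θ).fun_mul (hS θ)) (by fun_prop) t
  simp only [← mul_assoc (h' _), hhw, hS0, hSpi, mul_zero, Complex.ofReal_zero, zero_mul, sub_zero,
    zero_sub] at parts
  simpa only [norm_mul, Complex.norm_I, one_mul, Complex.norm_real, Real.norm_eq_abs, norm_neg]
    using congrArg norm parts

-- The factor `sin θ * S θ` vanishes to second order at the stationary points, so a first
-- integration by parts gains a full power of `t`.
theorem norm_integral_expPhase_mul_sin_mul_le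
    (hδ0 : 0 < δ) (hδ1 : δ ≤ 1) (hδt : |t| * δ ^ 3 = 1)
    (hh : ∀ θ, HasDerivAt h (h' θ) θ) (hh' : Continuous h') (hhw : ∀ θ, h' θ * w θ = Real.sin θ)
    (hw : ∀ θ, HasDerivAt w (w' θ) θ) (hw' : ∀ θ, HasDerivAt w' (w'' θ) θ) (hw'' : Continuous w'')
    (hS : ∀ θ, HasDerivAt S (S' θ) θ) (hS' : ∀ θ, HasDerivAt S' (S'' θ) θ) (hS'' : Continuous S'')
    (hS0 : S 0 = 0) (hSpi : S Real.pi = 0) (hW1 : 1 ≤ W)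
    (hW : ∀ θ ∈ Set.Icc 0 Real.pi, |w θ| ≤ W ∧ |w' θ| ≤ W ∧ |w'' θ| ≤ W)
    (hM : ∀ θ ∈ Set.Icc 0 Real.pi, |S θ| ≤ M ∧ |S' θ| ≤ M ∧ |S'' θ| ≤ M) :
    ‖∫ θ in (0 : ℝ)..Real.pi, expPhase h t θ * (Real.sin θ * S θ : ℝ)‖ ≤
      (2 + (1 + Real.pi) * Real.pi ^ 2 / 2) * (6 * M * W ^ 2) * δ ^ 4 := by
  have hM0 : 0 ≤ M := (abs_nonneg _).trans (hM 0 (Set.left_mem_Icc.2 Real.pi_pos.le)).1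
  have hMW : M * W ≤ M * W ^ 2 := by gcongr; exact le_self_pow₀ hW1 two_ne_zero
  have ht : |t| = 1 / δ ^ 3 := eq_one_div_of_mul_eq_one_left hδt
  have hw_cont : Continuous w := continuous_iff_continuousAt.2 fun θ => (hw θ).continuousAt
  have hw'_cont : Continuous w' := continuous_iff_continuousAt.2 fun θ => (hw' θ).continuousAt
  have hS_cont : Continuous S := continuous_iff_continuousAt.2 fun θ => (hS θ).continuousAt
  have hS'_cont : Continuous S' := continuous_iff_continuousAt.2 fun θ => (hS' θ).continuousAt
  set g : ℝ → ℝ := fun θ => w' θ * S θ + w θ * S' θ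
  set g' : ℝ → ℝ := fun θ => w'' θ * S θ + w' θ * S' θ + (w' θ * S' θ + w θ * S'' θ)
  have hg : ∀ θ, HasDerivAt g (g' θ) θ := fun θ =>
    ((hw' θ).fun_mul (hS θ)).fun_add ((hw θ).fun_mul (hS' θ))
  have hgM : ∀ θ ∈ Set.Icc 0 Real.pi, |g θ| ≤ W * M + W * M := fun θ hθ =>
    abs_mul_add_mul_le (hW θ hθ).2.1 (hM θ hθ).1 (hW θ hθ).1 (hM θ hθ).2.1
  have hg'M : ∀ θ ∈ Set.Icc 0 Real.pi, |g' θ| ≤ W * M + W * M + (W * M + W * M) := fun θ hθ =>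
    (abs_add_le _ _).trans (add_le_add
      (abs_mul_add_mul_le (hW θ hθ).2.2 (hM θ hθ).1 (hW θ hθ).2.1 (hM θ hθ).2.1)
      (abs_mul_add_mul_le (hW θ hθ).2.1 (hM θ hθ).2.1 (hW θ hθ).1 (hM θ hθ).2.2))
  have decay := norm_integral_expPhase_mul_le_of_deriv_mul_eq_sin_mul (A := 6 * M * W ^ 2)
    hδ0 hδ1 hδt hh hh' (fun θ => (hw θ).fun_mul (hg θ)) (by fun_prop) (by fun_prop)
    (fun θ => by rw [← mul_assoc, hhw]) (fun θ hθ => (hgM θ hθ).trans (by nlinarith))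
    (fun θ hθ => (abs_mul_le_mul (hW θ hθ).1 (hgM θ hθ)).trans (by nlinarith))
    (fun θ hθ => (abs_mul_add_mul_le (hW θ hθ).2.1 (hgM θ hθ) (hW θ hθ).1 (hg'M θ hθ)).trans
      (by nlinarith))
  rw [← abs_mul_norm_integral_expPhase_mul_sin_mul_eq hh hh' hw hw'_cont hhw hS hS'_cont hS0 hSpi,
    ht, one_div_mul_eq_div, div_le_iff₀ (by positivity)] at decay
  exact decay.trans_eq (by ring)

theorem norm_integral_expPhase_mul_sin_mul_sin_le
    (hδ0 : 0 < δ) (hδ1 : δ ≤ 1) (hδt : |t| * δ ^ 3 = 1)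
    (hh : ∀ θ, HasDerivAt h (h' θ) θ) (hh' : Continuous h') (hhw : ∀ θ, h' θ * w θ = Real.sin θ)
    (hw : ∀ θ, HasDerivAt w (w' θ) θ) (hw' : ∀ θ, HasDerivAt w' (w'' θ) θ) (hw'' : Continuous w'')
    (hW1 : 1 ≤ W) (hW : ∀ θ ∈ Set.Icc 0 Real.pi, |w θ| ≤ W ∧ |w' θ| ≤ W ∧ |w'' θ| ≤ W)
    {m : ℕ} (hm : 1 ≤ m) :
    ‖∫ θ in (0 : ℝ)..Real.pi, expPhase h t θ * (Real.sin θ * Real.sin (m * θ) : ℝ)‖ ≤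
      (2 + (1 + Real.pi) * Real.pi ^ 2 / 2) * (6 * (m : ℝ) ^ 2 * W ^ 2) * δ ^ 4 := by
  have hm1 : (1 : ℝ) ≤ m := Nat.one_le_cast.2 hm
  have hlin : ∀ θ, HasDerivAt (fun θ => (m : ℝ) * θ) m θ := fun θ => by
    simpa using (hasDerivAt_id θ).const_mul (m : ℝ)
  refine norm_integral_expPhase_mul_sin_mul_le hδ0 hδ1 hδt hh hh' hhw hw hw' hw''
    (fun θ => (hlin θ).sin) (fun θ => (hlin θ).cos.mul_const _) (by fun_prop) (by simp)
    (Real.sin_nat_mul_pi m) hW1 hW fun θ _ => ?_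
  simp only [abs_mul, abs_neg, Nat.abs_cast]
  have hsin := Real.abs_sin_le_one (m * θ)
  have hcos := Real.abs_cos_le_one (m * θ)
  exact ⟨by nlinarith, by nlinarith, by nlinarith⟩

end OscillatoryIntegral

section CoefficientDecay

variable {ψ : ℝ → ℝ}

/-- An admissible dispersion relation: a function which is `C³` near `[-1, 1]` and has no critical
point there. The unitary groups under consideration are `e^{i t ψ(X)}`, where `X` is a self-adjoint
contraction. -/
structure IsDispersionRelation (ψ : ℝ → ℝ) : Prop where
  contDiffAt : ∀ x ∈ Set.Icc (-1 : ℝ) 1, ContDiffAt ℝ 3 ψ x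
  deriv_ne_zero : ∀ x ∈ Set.Icc (-1 : ℝ) 1, deriv ψ x ≠ 0

theorem exists_abs_le_of_contDiff_two {w : ℝ → ℝ} (hw : ContDiff ℝ 2 w) (a b : ℝ) :
    ∃ W, 1 ≤ W ∧ ∀ θ ∈ Set.Icc a b, |w θ| ≤ W ∧ |deriv w θ| ≤ W ∧ |deriv (deriv w) θ| ≤ W := by
  have hw' : ContDiff ℝ 1 (deriv w) := hw.deriv'
  have hw'' : Continuous (deriv (deriv w)) := hw'.continuous_deriv le_rfl
  obtain ⟨W₀, hW₀⟩ := isCompact_Icc.exists_bound_of_continuousOn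
    (s := Set.Icc a b) hw.continuous.continuousOn
  obtain ⟨W₁, hW₁⟩ := isCompact_Icc.exists_bound_of_continuousOn
    (s := Set.Icc a b) hw'.continuous.continuousOn
  obtain ⟨W₂, hW₂⟩ := isCompact_Icc.exists_bound_of_continuousOn
    (s := Set.Icc a b) hw''.continuousOn
  refine ⟨max 1 (max W₀ (max W₁ W₂)), le_max_left _ _, fun θ hθ => ⟨?_, ?_, ?_⟩⟩
  · exact (hW₀ θ hθ).trans (by simp)
  · exact (hW₁ θ hθ).trans (by simp)
  · exact (hW₂ θ hθ).trans (by simp)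

namespace IsDispersionRelation

theorem continuousOn (hψ : IsDispersionRelation ψ) : ContinuousOn ψ (Set.Icc (-1) 1) :=
  fun x hx => (hψ.contDiffAt x hx).continuousAt.continuousWithinAt

theorem contDiff_deriv_comp_cos (hψ : IsDispersionRelation ψ) :
    ContDiff ℝ 2 fun θ => deriv ψ (Real.cos θ) :=
  contDiff_iff_contDiffAt.2 fun θ =>
    (((hψ.contDiffAt _ (Real.cos_mem_Icc θ)).fderiv_right (m := 2) (by norm_num)).clm_apply
      contDiffAt_const).comp θ Real.contDiff_cos.contDiffAt

theorem hasDerivAt_comp_cos (hψ : IsDispersionRelation ψ) (θ : ℝ) :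
    HasDerivAt (fun θ => ψ (Real.cos θ)) (deriv ψ (Real.cos θ) * -Real.sin θ) θ :=
  ((hψ.contDiffAt _ (Real.cos_mem_Icc θ)).differentiableAt (by norm_num)).hasDerivAt.comp θ
    (Real.hasDerivAt_cos θ)

theorem exists_norm_chebyshevUCoeff_expPhase_le (hψ : IsDispersionRelation ψ) :
    ∃ C, ∀ t δ : ℝ, 0 < δ → δ ≤ 1 → |t| * δ ^ 3 = 1 → ∀ n : ℕ,
      ‖chebyshevUCoeff (expPhase ψ t) n‖ ≤ C * ((n : ℝ) + 1) ^ 2 * δ ^ 4 := by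
  have hne : ∀ θ, -deriv ψ (Real.cos θ) ≠ 0 := fun θ =>
    neg_ne_zero.2 (hψ.deriv_ne_zero _ (Real.cos_mem_Icc θ))
  have hw : ContDiff ℝ 2 fun θ => (-deriv ψ (Real.cos θ))⁻¹ :=
    hψ.contDiff_deriv_comp_cos.neg.inv hne
  have hw' : ContDiff ℝ 1 (deriv fun θ => (-deriv ψ (Real.cos θ))⁻¹) := hw.deriv'
  obtain ⟨W, hW1, hW⟩ := exists_abs_le_of_contDiff_two hw 0 Real.pi
  refine ⟨2 / Real.pi * ((2 + (1 + Real.pi) * Real.pi ^ 2 / 2) * (6 * W ^ 2)),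
    fun t δ hδ0 hδ1 hδt n => ?_⟩
  have decay := norm_integral_expPhase_mul_sin_mul_sin_le hδ0 hδ1 hδt hψ.hasDerivAt_comp_cos
    (hψ.contDiff_deriv_comp_cos.continuous.mul (by fun_prop))
    (fun θ => by rw [mul_neg, ← neg_mul, mul_right_comm, mul_inv_cancel₀ (hne θ), one_mul])
    (fun θ => (hw.differentiable (by norm_num) θ).hasDerivAt)
    (fun θ => (hw'.differentiable (by norm_num) θ).hasDerivAt) (hw'.continuous_deriv le_rfl)
    hW1 hW (m := n + 1) (by omega)
  rw [chebyshevUCoeff, norm_mul, Complex.norm_of_nonneg (by positivity)]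
  push_cast at decay ⊢
  calc _ ≤ 2 / Real.pi * _ := mul_le_mul_of_nonneg_left decay (by positivity)
    _ = _ := by ring

end IsDispersionRelation

end CoefficientDecay

section AlmostOrthogonality

variable {𝕜 E : Type*} [RCLike 𝕜] [NormedAddCommGroup E] [InnerProductSpace 𝕜 E]

theorem norm_sum_smul_sq_le {ι : Type*} {J : Finset ι} {x : ι → E} {M : ℝ}
    (hM : ∀ j ∈ J, ∑ k ∈ J, ‖inner 𝕜 (x j) (x k)‖ ≤ M) (c : ι → 𝕜) :
    ‖∑ j ∈ J, c j • x j‖ ^ 2 ≤ M * ∑ j ∈ J, ‖c j‖ ^ 2 := by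
  have hexpand : ‖∑ j ∈ J, c j • x j‖ ^ 2 ≤
      ∑ j ∈ J, ∑ k ∈ J, ‖c j‖ * ‖c k‖ * ‖inner 𝕜 (x j) (x k)‖ := by
    rw [← inner_self_eq_norm_sq (𝕜 := 𝕜), sum_inner]
    refine (RCLike.re_le_norm _).trans ((norm_sum_le _ _).trans (Finset.sum_le_sum fun j _ => ?_))
    rw [inner_sum]
    refine (norm_sum_le _ _).trans_eq (Finset.sum_congr rfl fun k _ => ?_)
    rw [inner_smul_left, inner_smul_right, norm_mul, norm_mul, RCLike.norm_conj, mul_assoc]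
  have hrow : ∑ j ∈ J, ∑ k ∈ J, ‖c j‖ ^ 2 * ‖inner 𝕜 (x j) (x k)‖ ≤
      M * ∑ j ∈ J, ‖c j‖ ^ 2 := by
    rw [Finset.mul_sum]
    refine Finset.sum_le_sum fun j hj => ?_
    rw [← Finset.mul_sum, mul_comm M]
    exact mul_le_mul_of_nonneg_left (hM j hj) (sq_nonneg _)
  have hcol : ∑ j ∈ J, ∑ k ∈ J, ‖c k‖ ^ 2 * ‖inner 𝕜 (x j) (x k)‖ ≤
      M * ∑ j ∈ J, ‖c j‖ ^ 2 := by
    rw [Finset.sum_comm]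
    simpa only [norm_inner_symm] using hrow
  have hyoung : ∑ j ∈ J, ∑ k ∈ J, 2 * (‖c j‖ * ‖c k‖ * ‖inner 𝕜 (x j) (x k)‖) ≤
      ∑ j ∈ J, ∑ k ∈ J, (‖c j‖ ^ 2 * ‖inner 𝕜 (x j) (x k)‖ +
        ‖c k‖ ^ 2 * ‖inner 𝕜 (x j) (x k)‖) := by
    refine Finset.sum_le_sum fun j _ => Finset.sum_le_sum fun k _ => ?_
    rw [← add_mul, ← mul_assoc, ← mul_assoc]
    exact mul_le_mul_of_nonneg_right (two_mul_le_add_sq _ _) (norm_nonneg _)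
  simp only [Finset.sum_add_distrib, ← Finset.mul_sum] at hyoung hrow hcol
  linarith

/-- Selberg's generalization of Bessel's inequality to almost orthogonal families: pair `f` with
`∑ j, ⟪x j, f⟫ • x j`. -/
theorem sum_norm_inner_sq_le {ι : Type*} {J : Finset ι} {x : ι → E} {M : ℝ} (hM0 : 0 ≤ M)
    (hM : ∀ j ∈ J, ∑ k ∈ J, ‖inner 𝕜 (x j) (x k)‖ ≤ M) (f : E) :
    ∑ j ∈ J, ‖inner 𝕜 (x j) f‖ ^ 2 ≤ M * ‖f‖ ^ 2 := by
  set A := ∑ j ∈ J, ‖inner 𝕜 (x j) f‖ ^ 2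
  set Φ := ∑ j ∈ J, inner 𝕜 (x j) f • x j
  have hA0 : 0 ≤ A := by positivity
  have hA : A ≤ ‖Φ‖ * ‖f‖ := by
    have hΦf : inner 𝕜 Φ f = (A : 𝕜) := by
      simp only [Φ, A, sum_inner, inner_smul_left, RCLike.conj_mul]
      push_cast
      rfl
    simpa only [hΦf, RCLike.norm_ofReal, abs_of_nonneg hA0] using norm_inner_le_norm (𝕜 := 𝕜) Φ f
  rcases hA0.eq_or_lt with hA_zero | hA_pos
  · rw [← hA_zero]
    positivity
  · refine le_of_mul_le_mul_left ?_ hA_pos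
    calc A * A ≤ (‖Φ‖ * ‖f‖) * (‖Φ‖ * ‖f‖) := mul_self_le_mul_self hA0 hA
      _ = ‖Φ‖ ^ 2 * ‖f‖ ^ 2 := by ring
      _ ≤ M * A * ‖f‖ ^ 2 := by gcongr; exact norm_sum_smul_sq_le hM _
      _ = A * (M * ‖f‖ ^ 2) := by ring

/-- The `TT*` argument: the vectors `U (-j) (v j)` are almost orthogonal. -/
theorem sum_norm_inner_unitaryGroup_sq_le [CompleteSpace E] {H : Type*} [AddCommGroup H]
    {U : H → E →L[𝕜] E} (hstar : ∀ s, star (U s) = U (-s)) (hadd : ∀ s t, U (s + t) = U s * U t)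
    {K : H → ℝ} (hK : Summable K) {v : H → E}
    (hv : ∀ j k, ‖inner 𝕜 (v j) (U (j - k) (v k))‖ ≤ K (j - k)) (J : Finset H) (f : E) :
    ∑ j ∈ J, ‖inner 𝕜 (v j) (U j f)‖ ^ 2 ≤ (∑' j, K j) * ‖f‖ ^ 2 := by
  have hadj : ∀ j x y, inner 𝕜 (U (-j) x) y = inner 𝕜 x (U j y) := fun j x y => by
    rw [← hstar, ContinuousLinearMap.star_eq_adjoint, ContinuousLinearMap.adjoint_inner_left]
  have hK0 : ∀ j, 0 ≤ K j := fun j => by simpa using (norm_nonneg _).trans (hv j 0)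
  have hrow : ∀ j ∈ J, ∑ k ∈ J, ‖inner 𝕜 (U (-j) (v j)) (U (-k) (v k))‖ ≤ ∑' i, K i :=
    fun j _ => by
    calc ∑ k ∈ J, ‖inner 𝕜 (U (-j) (v j)) (U (-k) (v k))‖
        ≤ ∑ k ∈ J, K (j - k) := Finset.sum_le_sum fun k _ => by
          rw [hadj, ← mul_apply_eq_comp, ← hadd, ← sub_eq_add_neg]
          exact hv j k
      _ ≤ ∑' k, K (j - k) :=
          ((Equiv.subLeft j).summable_iff.2 hK).sum_le_tsum J fun k _ => hK0 _
      _ = ∑' i, K i := (Equiv.subLeft j).tsum_eq K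
  simpa only [hadj] using sum_norm_inner_sq_le (tsum_nonneg hK0) hrow f

end AlmostOrthogonality

section DiscreteRestriction

open scoped lp

theorem exists_sum_mul_conj_eq_rpow {ι 𝕜 : Type*} [RCLike 𝕜] {q r : ℝ} (hqr : q.HolderConjugate r)
    (S : Finset ι) (F : ι → 𝕜) :
    ∃ g : ι → 𝕜, ∑ x ∈ S, ‖g x‖ ^ r ≤ 1 ∧
      ∑ x ∈ S, F x * (starRingEnd 𝕜) (g x) = ((∑ x ∈ S, ‖F x‖ ^ q) ^ (1 / q) : ℝ) := by
  obtain ⟨g, hg, hFg⟩ := (NNReal.isGreatest_Lp S (fun x => ‖F x‖₊) hqr).1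
  have hphase : ∀ x, ‖((g x : ℝ) : 𝕜) * (F x / ‖F x‖)‖ ≤ g x := fun x => by
    rw [norm_mul, norm_div, RCLike.norm_ofReal, RCLike.norm_ofReal, abs_norm, NNReal.abs_eq]
    exact mul_le_of_le_one_right (g x).2 (div_self_le_one _)
  refine ⟨fun x => (g x : ℝ) * (F x / ‖F x‖), ?_, ?_⟩
  · calc ∑ x ∈ S, ‖((g x : ℝ) : 𝕜) * (F x / ‖F x‖)‖ ^ r ≤ ∑ x ∈ S, (g x : ℝ) ^ r :=
          Finset.sum_le_sum fun x _ =>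
            Real.rpow_le_rpow (norm_nonneg _) (hphase x) hqr.symm.nonneg
      _ ≤ 1 := by exact_mod_cast hg
  · have hterm : ∀ x, F x * (starRingEnd 𝕜) ((g x : ℝ) * (F x / ‖F x‖)) =
        ((‖F x‖₊ * g x : ℝ) : 𝕜) := fun x => by
      rcases eq_or_ne (F x) 0 with hF | hF
      · simp [hF]
      have hF' : (‖F x‖ : 𝕜) ≠ 0 := by simpa using hF
      simp only [map_mul, map_div₀, RCLike.conj_ofReal, coe_nnnorm]
      rw [mul_left_comm, mul_div_assoc', RCLike.mul_conj, sq, mul_div_cancel_right₀ _ hF', mul_comm]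
    have hFg' : ∑ x ∈ S, (‖F x‖₊ * g x : ℝ) = (∑ x ∈ S, ‖F x‖ ^ q) ^ (1 / q) := by
      simpa using congrArg NNReal.toReal hFg
    simp only [hterm, ← hFg']
    push_cast
    rfl

variable {V H : Type*} [AddCommGroup H] {U : H → ℓ²(V, ℂ) →L[ℂ] ℓ²(V, ℂ)} {K : H → ℝ}

theorem sum_rpow_sum_norm_unitaryGroup_le [DecidableEq V] (hstar : ∀ s, star (U s) = U (-s))
    (hadd : ∀ s t, U (s + t) = U s * U t) (hK : Summable K) {q r : ℝ} (hqr : q.HolderConjugate r)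
    (hU : ∀ (S : Finset V) (g h : V → ℂ), ∑ x ∈ S, ‖g x‖ ^ r ≤ 1 → ∑ x ∈ S, ‖h x‖ ^ r ≤ 1 →
      ∀ j, ‖inner ℂ (∑ x ∈ S, lp.single 2 x (g x)) (U j (∑ x ∈ S, lp.single 2 x (h x)))‖ ≤ K j)
    (J : Finset H) (S : Finset V) (f : ℓ²(V, ℂ)) :
    ∑ j ∈ J, (∑ x ∈ S, ‖U j f x‖ ^ q) ^ (2 / q) ≤ (∑' j, K j) * ‖f‖ ^ 2 := by
  choose g hg hgU using fun j => exists_sum_mul_conj_eq_rpow hqr S (fun x => U j f x)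
  have hinner : ∀ j, ‖inner ℂ (∑ x ∈ S, lp.single 2 x (g j x)) (U j f)‖ ^ 2 =
      (∑ x ∈ S, ‖U j f x‖ ^ q) ^ (2 / q) := fun j => by
    have hpair : inner ℂ (∑ x ∈ S, lp.single 2 x (g j x)) (U j f) =
        ((∑ x ∈ S, ‖U j f x‖ ^ q) ^ (1 / q) : ℝ) := by
      simp only [sum_inner, lp.inner_single_left, RCLike.inner_apply]
      exact hgU j
    rw [hpair, Complex.norm_of_nonneg (by positivity), ← Real.rpow_mul_natCast (by positivity),
      Nat.cast_two, one_div_mul_eq_div]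
  simp only [← hinner]
  exact sum_norm_inner_unitaryGroup_sq_le hstar hadd hK
    (fun j k => hU S (g j) (g k) (hg j) (hg k) (j - k)) J f

theorem tsum_eLpNorm_unitaryGroup_sq_le [DecidableEq V] [MeasurableSpace V]
    [DiscreteMeasurableSpace V] (hstar : ∀ s, star (U s) = U (-s))
    (hadd : ∀ s t, U (s + t) = U s * U t) (hK : Summable K) {q : ℝ≥0∞} {r : ℝ}
    (hqr : q.toReal.HolderConjugate r)
    (hU : ∀ (S : Finset V) (g h : V → ℂ), ∑ x ∈ S, ‖g x‖ ^ r ≤ 1 → ∑ x ∈ S, ‖h x‖ ^ r ≤ 1 →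
      ∀ j, ‖inner ℂ (∑ x ∈ S, lp.single 2 x (g x)) (U j (∑ x ∈ S, lp.single 2 x (h x)))‖ ≤ K j)
    (f : ℓ²(V, ℂ)) :
    ∑' j, eLpNorm (U j f) q Measure.count ^ (2 : ℝ) ≤
      ENNReal.ofReal ((∑' j, K j) * ‖f‖ ^ 2) := by
  obtain ⟨hq0, hqt⟩ := ENNReal.toReal_pos_iff.1 hqr.pos
  have hfinite : ∀ (J : Finset H) (S : Finset V),
      ∑ j ∈ J, (∑ x ∈ S, ‖U j f x‖ₑ ^ q.toReal) ^ (2 / q.toReal) ≤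
        ENNReal.ofReal ((∑' j, K j) * ‖f‖ ^ 2) := fun J S => by
    refine Eq.trans_le ?_ (ENNReal.ofReal_le_ofReal
      (sum_rpow_sum_norm_unitaryGroup_le hstar hadd hK hqr hU J S f))
    have hq : 0 ≤ q.toReal := ENNReal.toReal_nonneg
    rw [ENNReal.ofReal_sum_of_nonneg fun j _ => by positivity]
    refine Finset.sum_congr rfl fun j _ => ?_
    rw [← ENNReal.ofReal_rpow_of_nonneg (by positivity) (by positivity),
      ENNReal.ofReal_sum_of_nonneg fun x _ => by positivity]
    simp only [← ENNReal.ofReal_rpow_of_nonneg (norm_nonneg _) hq, ofReal_norm]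
  rw [ENNReal.tsum_eq_iSup_sum]
  refine iSup_le fun J => ?_
  have hlim : Filter.Tendsto
      (fun S : Finset V => ∑ j ∈ J, (∑ x ∈ S, ‖U j f x‖ₑ ^ q.toReal) ^ (2 / q.toReal))
      Filter.atTop (nhds (∑ j ∈ J, eLpNorm (U j f) q Measure.count ^ (2 : ℝ))) := by
    refine tendsto_finsetSum _ fun j _ => ?_
    rw [eLpNorm_eq_lintegral_rpow_enorm_toReal hq0.ne' hqt.ne, lintegral_count,
      ← ENNReal.rpow_mul, one_div_mul_eq_div]
    exact (ENNReal.continuous_rpow_const.tendsto _).comp ENNReal.summable.hasSum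
  exact le_of_tendsto' hlim fun S => hfinite J S

end DiscreteRestriction

section Evolution

variable {A : Type*} [CStarAlgebra A] {ψ : ℝ → ℝ} {a : A}

/-- The unitary group `e^{i t ψ(a)}` generated by a function `ψ` of a self-adjoint element `a`. It
is only used for `‖a‖ ≤ 1`, so that the values of `ψ` on `[-1, 1]` matter. -/
noncomputable def evolution (ψ : ℝ → ℝ) (a : A) (t : ℝ) : A :=
  cfc (fun z : ℂ => expPhase ψ t z.re) a

theorem norm_evolution_le_one (ψ : ℝ → ℝ) (a : A) (t : ℝ) : ‖evolution ψ a t‖ ≤ 1 :=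
  norm_cfc_le zero_le_one fun _ _ => (norm_expPhase ψ t _).le

theorem evolution_add (hψ : ContinuousOn ψ (Set.Icc (-1) 1)) (ha1 : ‖a‖ ≤ 1) (s t : ℝ) :
    evolution ψ a (s + t) = evolution ψ a s * evolution ψ a t := by
  rw [evolution, evolution, evolution,
    ← cfc_mul _ _ a (continuousOn_comp_re_spectrum ha1 (continuousOn_expPhase hψ s))
      (continuousOn_comp_re_spectrum ha1 (continuousOn_expPhase hψ t))]
  simp only [expPhase, add_mul, Complex.ofReal_add, Complex.exp_add]

theorem star_evolution (ψ : ℝ → ℝ) (a : A) (t : ℝ) :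
    star (evolution ψ a t) = evolution ψ a (-t) := by
  rw [evolution, evolution, ← cfc_star]
  simp only [expPhase, RCLike.star_def, ← Complex.exp_conj, map_mul, Complex.conj_I,
    Complex.conj_ofReal, neg_mul, mul_neg, Complex.ofReal_neg]

end Evolution

section DispersiveEstimate

open Polynomial Polynomial.Chebyshev
open scoped lp

variable {ψ : ℝ → ℝ}

theorem abs_rpow_neg_one_third_pow_three {x : ℝ} (hx : x ≠ 0) :
    |x| * (|x| ^ (-(1 / 3) : ℝ)) ^ 3 = 1 := by
  rw [← Real.rpow_mul_natCast (abs_nonneg x)]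
  norm_num
  rw [Real.rpow_neg_one, mul_inv_cancel₀ (abs_ne_zero.2 hx)]

theorem IsDispersionRelation.exists_summable_chebyshevUCoeff_expPhase_le
    (hψ : IsDispersionRelation ψ) :
    ∃ κ : ℤ → ℝ, Summable κ ∧
      ∀ (j : ℤ) (n : ℕ), ‖chebyshevUCoeff (expPhase ψ j) n‖ ≤ κ j * ((n : ℝ) + 1) ^ 2 := by
  obtain ⟨C, hC⟩ := hψ.exists_norm_chebyshevUCoeff_expPhase_le
  refine ⟨fun j => C * |(j : ℝ)| ^ (-(4 / 3) : ℝ) + if j = 0 then 2 else 0,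
    ((Real.summable_abs_int_rpow (by norm_num)).mul_left C).add
      (hasSum_ite_eq (0 : ℤ) (2 : ℝ)).summable, fun j n => ?_⟩
  rcases eq_or_ne j 0 with rfl | hj
  · calc ‖chebyshevUCoeff (expPhase ψ (0 : ℤ)) n‖ ≤ 2 * 1 :=
          norm_chebyshevUCoeff_le (fun x _ => (norm_expPhase _ _ _).le) n
      _ ≤ 2 * ((n : ℝ) + 1) ^ 2 := by
          gcongr
          exact one_le_pow₀ (by simp)
      _ = _ := by simp [Real.zero_rpow]
  · have hj1 : (1 : ℝ) ≤ |(j : ℝ)| := by exact_mod_cast Int.one_le_abs hj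
    refine (hC j (|(j : ℝ)| ^ (-(1 / 3) : ℝ)) (by positivity)
      (Real.rpow_le_one_of_one_le_of_nonpos hj1 (by norm_num))
      (abs_rpow_neg_one_third_pow_three (Int.cast_ne_zero.2 hj)) n).trans_eq ?_
    rw [← Real.rpow_mul_natCast (abs_nonneg _)]
    norm_num [hj]
    ring

theorem norm_inner_evolution_le_tsum {E : Type*} [NormedAddCommGroup E] [InnerProductSpace ℂ E]
    [CompleteSpace E] {a : E →L[ℂ] E} (ha : IsSelfAdjoint a) (ha1 : ‖a‖ ≤ 1)
    (hψ : ContinuousOn ψ (Set.Icc (-1) 1)) {t : ℝ} {B u : ℕ → ℝ}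
    (hB : ∀ n, ‖chebyshevUCoeff (expPhase ψ t) n‖ ≤ B n) {g h : E}
    (hU : ∀ n : ℕ, ‖inner ℂ g (aeval a (U ℂ n) h)‖ ≤ u n) (hu : Summable u)
    (hBu : Summable fun n => B n * u n) :
    ‖inner ℂ g (evolution ψ a t h)‖ ≤ ∑' n, B n * u n := by
  let Λ : (E →L[ℂ] E) →L[ℂ] ℂ := (innerSL ℂ g).comp (ContinuousLinearMap.apply ℂ E h)
  change ‖Λ (cfc (fun z : ℂ => expPhase ψ t z.re) a)‖ ≤ _
  rw [map_cfc_eq_tsum_chebyshevUCoeff ha ha1 (continuousOn_expPhase hψ t) Λ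
    (hu.of_nonneg_of_le (fun _ => norm_nonneg _) hU)]
  refine tsum_of_norm_bounded hBu.hasSum fun n => ?_
  rw [norm_mul]
  exact mul_le_mul (hB n) (hU n) (norm_nonneg _) ((norm_nonneg _).trans (hB n))

theorem summable_add_one_pow_mul_geometric (k : ℕ) {ρ : ℝ} (hρ : ρ ∈ Set.Ioo 0 1) :
    Summable fun n : ℕ => ((n : ℝ) + 1) ^ k * ρ ^ n := by
  have hgeometric := summable_pow_mul_geometric_of_norm_lt_one k (r := ρ)
    (by rw [Real.norm_of_nonneg hρ.1.le]; exact hρ.2)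
  refine (((summable_nat_add_iff 1).2 hgeometric).mul_right ρ⁻¹).congr fun n => ?_
  rw [pow_succ, mul_assoc, mul_inv_cancel_right₀ hρ.1.ne', Nat.cast_add_one]

variable {V : Type*} {G : SimpleGraph V} [G.LocallyFinite] {Q : ℕ}
  {X : ℓ²(V, ℂ) →L[ℂ] ℓ²(V, ℂ)} {r θ : ℝ}

theorem IsNormalizedAdjacency.norm_inner_aeval_chebyshevU_le [DecidableEq V]
    (hX : IsNormalizedAdjacency G Q X) (hsa : IsSelfAdjoint X) (hG : G.IsTree)
    (hdeg : G.IsRegularOfDegree (Q + 1)) (hQ : 0 < Q) (hθ : θ ∈ Set.Ioo 0 1)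
    (hr : r * (1 - θ / 2) = 1) {S : Finset V} {g h : V → ℂ}
    (hg : ∑ x ∈ S, ‖g x‖ ^ r ≤ 1) (hh : ∑ x ∈ S, ‖h x‖ ^ r ≤ 1) (n : ℕ) :
    ‖inner ℂ (∑ x ∈ S, lp.single 2 x (g x)) (aeval X (U ℂ n) (∑ x ∈ S, lp.single 2 x (h x)))‖ ≤
      ((n : ℝ) + 1) * ((√(Q : ℝ))⁻¹ ^ (1 - θ)) ^ n := by
  have hs : 0 ≤ (√(Q : ℝ))⁻¹ := by positivity
  calc _ ≤ ((√(Q : ℝ))⁻¹ ^ n) ^ (1 - θ) * ((n : ℝ) + 1) ^ θ :=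
        norm_inner_sum_single_le (pow_nonneg hs n) hθ hr
          (fun x y => hX.aeval_chebyshevU_single hG hdeg hQ y n x)
          (fun x y => ⟨treeChebyshevKernel_nonneg hs n _, treeChebyshevKernel_le hs n _⟩)
          (norm_aeval_chebyshevU_le hsa (hX.norm_le_one hG hdeg hQ) n) hg hh
    _ ≤ ((√(Q : ℝ))⁻¹ ^ n) ^ (1 - θ) * ((n : ℝ) + 1) ^ (1 : ℝ) := by
        gcongr
        exacts [by simp, hθ.2.le]
    _ = _ := by rw [Real.rpow_one, Real.rpow_pow_comm hs, mul_comm]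

theorem inv_sqrt_rpow_mem_Ioo (hQ : 1 < Q) (hθ : θ < 1) :
    (√(Q : ℝ))⁻¹ ^ (1 - θ) ∈ Set.Ioo 0 1 := by
  have hQ1 : 1 < √(Q : ℝ) := Real.lt_sqrt_of_sq_lt (by simpa using hQ)
  exact ⟨by positivity,
    Real.rpow_lt_one (by positivity) (inv_lt_one_of_one_lt₀ hQ1) (sub_pos.2 hθ)⟩

theorem IsNormalizedAdjacency.norm_inner_evolution_le [DecidableEq V]
    (hX : IsNormalizedAdjacency G Q X) (hsa : IsSelfAdjoint X) (hG : G.IsTree)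
    (hdeg : G.IsRegularOfDegree (Q + 1)) (hQ : 1 < Q)
    (hθ : θ ∈ Set.Ioo 0 1) (hr : r * (1 - θ / 2) = 1) (hψ : ContinuousOn ψ (Set.Icc (-1) 1))
    {t κ : ℝ} (hκ : ∀ n : ℕ, ‖chebyshevUCoeff (expPhase ψ t) n‖ ≤ κ * ((n : ℝ) + 1) ^ 2)
    {S : Finset V} {g h : V → ℂ} (hg : ∑ x ∈ S, ‖g x‖ ^ r ≤ 1) (hh : ∑ x ∈ S, ‖h x‖ ^ r ≤ 1) :
    ‖inner ℂ (∑ x ∈ S, lp.single 2 x (g x))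
        (evolution ψ X t (∑ x ∈ S, lp.single 2 x (h x)))‖ ≤
      κ * ∑' n : ℕ, ((n : ℝ) + 1) ^ 3 * ((√(Q : ℝ))⁻¹ ^ (1 - θ)) ^ n := by
  have hQ0 : 0 < Q := one_pos.trans hQ
  have hρ := inv_sqrt_rpow_mem_Ioo hQ hθ.2
  have hU := hX.norm_inner_aeval_chebyshevU_le hsa hG hdeg hQ0 hθ hr hg hh
  set ρ : ℝ := (√(Q : ℝ))⁻¹ ^ (1 - θ)
  have hterm : ∀ n : ℕ, κ * ((n : ℝ) + 1) ^ 2 * (((n : ℝ) + 1) * ρ ^ n) =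
      κ * (((n : ℝ) + 1) ^ 3 * ρ ^ n) := fun n => by ring
  have hsum₁ : Summable fun n : ℕ => ((n : ℝ) + 1) * ρ ^ n := by
    simpa only [pow_one] using summable_add_one_pow_mul_geometric 1 hρ
  have hsum₃ : Summable fun n : ℕ => κ * ((n : ℝ) + 1) ^ 2 * (((n : ℝ) + 1) * ρ ^ n) := by
    simpa only [hterm] using (summable_add_one_pow_mul_geometric 3 hρ).mul_left κ
  have hX1 := hX.norm_le_one hG hdeg hQ0
  simpa only [hterm, tsum_mul_left] using
    norm_inner_evolution_le_tsum hsa hX1 hψ hκ hU hsum₁ hsum₃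

theorem IsDispersionRelation.exists_summable_norm_inner_evolution_le [DecidableEq V]
    (hψ : IsDispersionRelation ψ) (hX : IsNormalizedAdjacency G Q X) (hsa : IsSelfAdjoint X)
    (hG : G.IsTree) (hdeg : G.IsRegularOfDegree (Q + 1)) (hQ : 1 < Q) (hθ : θ ∈ Set.Ioo 0 1)
    (hr : r * (1 - θ / 2) = 1) :
    ∃ K : ℤ → ℝ, Summable K ∧ ∀ (S : Finset V) (g h : V → ℂ),
      ∑ x ∈ S, ‖g x‖ ^ r ≤ 1 → ∑ x ∈ S, ‖h x‖ ^ r ≤ 1 → ∀ j : ℤ,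
        ‖inner ℂ (∑ x ∈ S, lp.single 2 x (g x))
          (evolution ψ X j (∑ x ∈ S, lp.single 2 x (h x)))‖ ≤ K j := by
  obtain ⟨κ, hκ, hcoeff⟩ := hψ.exists_summable_chebyshevUCoeff_expPhase_le
  exact ⟨_, hκ.mul_right _, fun S g h hg hh j =>
    hX.norm_inner_evolution_le hsa hG hdeg hQ hθ hr hψ.continuousOn (hcoeff j) hg hh⟩

theorem IsDispersionRelation.exists_tsum_eLpNorm_evolution_sq_le [MeasurableSpace V]
    [DiscreteMeasurableSpace V] (hψ : IsDispersionRelation ψ) (hX : IsNormalizedAdjacency G Q X)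
    (hsa : IsSelfAdjoint X) (hG : G.IsTree) (hdeg : G.IsRegularOfDegree (Q + 1)) (hQ : 1 < Q)
    {q : ℝ≥0∞} (hq : 2 < q) (hqt : q ≠ ⊤) :
    ∃ κ : ℝ, 0 ≤ κ ∧ ∀ (f : ℓ²(V, ℂ)) (s : ℝ),
      ∑' j : ℤ, eLpNorm (evolution ψ X (s + j) f) q Measure.count ^ (2 : ℝ) ≤
        ENNReal.ofReal (κ * ‖f‖ ^ 2) := by
  classical
  have hq2 : 2 < q.toReal := by
    simpa using (ENNReal.toReal_lt_toReal ENNReal.ofNat_ne_top hqt).2 hq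
  have hqr := Real.HolderConjugate.conjExponent (one_lt_two.trans hq2)
  have hX1 := hX.norm_le_one hG hdeg (one_pos.trans hQ)
  obtain ⟨K, hK, hdisp⟩ := hψ.exists_summable_norm_inner_evolution_le hX hsa hG hdeg hQ
    (θ := 2 / q.toReal) ⟨by positivity, (div_lt_one (by linarith)).2 hq2⟩
    (r := q.toReal.conjExponent) (by
      have : q.toReal - 1 ≠ 0 := by linarith
      unfold Real.conjExponent
      field_simp)
  refine ⟨|∑' j, K j|, abs_nonneg _, fun f s => ?_⟩
  have hsplit : ∀ j : ℤ, evolution ψ X (s + j) f = evolution ψ X j (evolution ψ X s f) :=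
    fun j => by rw [add_comm, evolution_add hψ.continuousOn hX1, mul_apply_eq_comp]
  simp only [hsplit]
  refine (tsum_eLpNorm_unitaryGroup_sq_le (U := fun j : ℤ => evolution ψ X j)
    (fun j => by rw [star_evolution, Int.cast_neg])
    (fun j k => by rw [Int.cast_add, evolution_add hψ.continuousOn hX1]) hK hqr hdisp
    (evolution ψ X s f)).trans (ENNReal.ofReal_le_ofReal ?_)
  gcongr
  · exact le_abs_self _
  · simpa only [one_mul] using
      ContinuousLinearMap.le_of_opNorm_le _ (norm_evolution_le_one ψ X s) f

end DispersiveEstimate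

section TimeIntegral

theorem tsum_lintegral_le_lintegral_tsum {ι β : Type*} [MeasurableSpace β] (μ : Measure β)
    (F : ι → β → ℝ≥0∞) : ∑' i, ∫⁻ x, F i x ∂μ ≤ ∫⁻ x, ∑' i, F i x ∂μ := by
  classical
  have hfinite : ∀ J : Finset ι, ∑ i ∈ J, ∫⁻ x, F i x ∂μ ≤ ∫⁻ x, ∑ i ∈ J, F i x ∂μ := fun J => by
    induction J using Finset.induction_on with
    | empty => simp
    | insert i J hi ih =>
      simp only [Finset.sum_insert hi]
      exact (add_le_add_right ih _).trans (le_lintegral_add _ _)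
  rw [ENNReal.tsum_eq_iSup_sum]
  exact iSup_le fun J => (hfinite J).trans (lintegral_mono fun x => ENNReal.sum_le_tsum J)

theorem lintegral_le_lintegral_tsum_translates (F : ℝ → ℝ≥0∞) :
    ∫⁻ t, F t ≤ ∫⁻ s in Set.Ioc (0 : ℝ) 1, ∑' j : ℤ, F (s + j) := by
  have htranslate : ∀ j : ℤ, ∫⁻ t in Set.Ioc (j : ℝ) (j + 1), F t =
      ∫⁻ s in Set.Ioc (0 : ℝ) 1, F (s + j) := fun j => by
    rw [← (measurePreserving_add_right volume (j : ℝ)).setLIntegral_comp_preimage_emb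
      (measurableEmbedding_addRight (j : ℝ)) F, Set.preimage_add_const_Ioc, sub_self,
      add_sub_cancel_left]
  calc ∫⁻ t, F t = ∑' j : ℤ, ∫⁻ t in Set.Ioc (j : ℝ) (j + 1), F t := by
        rw [← lintegral_iUnion (fun _ => measurableSet_Ioc) (Set.pairwise_disjoint_Ioc_intCast ℝ),
          iUnion_Ioc_intCast, setLIntegral_univ]
    _ = ∑' j : ℤ, ∫⁻ s in Set.Ioc (0 : ℝ) 1, F (s + j) := tsum_congr htranslate
    _ ≤ _ := tsum_lintegral_le_lintegral_tsum _ _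

theorem le_of_tsum_rpow_le {ι : Type*} {a : ι → ℝ≥0∞} {A : ℝ≥0∞} {c : ℝ} (hc : 0 < c)
    (h : ∑' i, a i ^ c ≤ A ^ c) (i : ι) : a i ≤ A :=
  (ENNReal.rpow_le_rpow_iff hc).1 ((ENNReal.le_tsum i).trans h)

theorem tsum_rpow_le_of_tsum_rpow_le {ι : Type*} {a : ι → ℝ≥0∞} {A : ℝ≥0∞} {b c : ℝ} (hc : 0 < c)
    (hcb : c ≤ b) (h : ∑' i, a i ^ c ≤ A ^ c) : ∑' i, a i ^ b ≤ A ^ b := by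
  have hpow : ∀ x : ℝ≥0∞, x ^ b = x ^ c * x ^ (b - c) := fun x => by
    rw [← ENNReal.rpow_add_of_nonneg _ _ hc.le (sub_nonneg.2 hcb), add_sub_cancel]
  calc ∑' i, a i ^ b ≤ ∑' i, a i ^ c * A ^ (b - c) := by
        refine ENNReal.tsum_le_tsum fun i => ?_
        rw [hpow]
        gcongr
        exact le_of_tsum_rpow_le hc h i
    _ = (∑' i, a i ^ c) * A ^ (b - c) := ENNReal.tsum_mul_right
    _ ≤ A ^ c * A ^ (b - c) := by gcongr
    _ = A ^ b := (hpow A).symm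

theorem eLpNorm_toReal_le_of_tsum_rpow_le {g : ℝ → ℝ≥0∞} {A p : ℝ≥0∞} {c : ℝ} (hc : 0 < c)
    (hp : ENNReal.ofReal c ≤ p) (hg : ∀ s, ∑' j : ℤ, g (s + j) ^ c ≤ A ^ c) :
    eLpNorm (fun t => (g t).toReal) p volume ≤ A := by
  have henorm : ∀ t, ‖(g t).toReal‖ₑ ≤ g t := fun t => by
    rw [Real.enorm_of_nonneg ENNReal.toReal_nonneg]
    exact ENNReal.ofReal_toReal_le
  rcases eq_or_ne p ⊤ with rfl | hpt
  · have hgA : ∀ t, g t ≤ A := fun t => by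
      simpa using le_of_tsum_rpow_le hc (hg t) 0
    rw [eLpNorm_exponent_top]
    exact eLpNormEssSup_le_of_ae_enorm_bound (.of_forall fun t => (henorm t).trans (hgA t))
  · have hcp : c ≤ p.toReal := (ENNReal.ofReal_le_iff_le_toReal hpt).1 hp
    have hp0 : 0 < p.toReal := hc.trans_le hcp
    rw [eLpNorm_eq_lintegral_rpow_enorm_toReal (ENNReal.toReal_pos_iff.1 hp0).1.ne' hpt, one_div,
      ENNReal.rpow_inv_le_iff hp0]
    calc ∫⁻ t, ‖(g t).toReal‖ₑ ^ p.toReal ≤ ∫⁻ t, g t ^ p.toReal :=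
          lintegral_mono fun t => ENNReal.rpow_le_rpow (henorm t) hp0.le
      _ ≤ ∫⁻ s in Set.Ioc (0 : ℝ) 1, ∑' j : ℤ, g (s + j) ^ p.toReal :=
          lintegral_le_lintegral_tsum_translates _
      _ ≤ ∫⁻ _ in Set.Ioc (0 : ℝ) 1, A ^ p.toReal :=
          lintegral_mono fun s => tsum_rpow_le_of_tsum_rpow_le hc hcp (hg s)
      _ = A ^ p.toReal := by simp

end TimeIntegral

section Strichartz

open scoped lp

variable {V : Type*} [MeasurableSpace V] [DiscreteMeasurableSpace V]

theorem eLpNorm_two_count_eq_norm (f : ℓ²(V, ℂ)) :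
    eLpNorm f 2 Measure.count = ENNReal.ofReal ‖f‖ := by
  have hf := lp.hasSum_norm (p := 2) (by norm_num) f
  have hsum : ∑' x, ‖f x‖ₑ ^ (2 : ℝ≥0∞).toReal = ENNReal.ofReal ‖f‖ ^ (2 : ℝ≥0∞).toReal := by
    rw [ENNReal.ofReal_rpow_of_nonneg (norm_nonneg _) (by norm_num), ← hf.tsum_eq,
      ENNReal.ofReal_tsum_of_nonneg (fun x => by positivity) hf.summable]
    simp only [← ENNReal.ofReal_rpow_of_nonneg (norm_nonneg _) ENNReal.toReal_nonneg, ofReal_norm]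
  rw [eLpNorm_eq_lintegral_rpow_enorm_toReal two_ne_zero ENNReal.ofNat_ne_top, lintegral_count,
    one_div, hsum, ENNReal.rpow_rpow_inv (by norm_num)]

theorem eLpNorm_top_count_le {E : Type*} [NormedAddCommGroup E] (F : V → E) {q : ℝ≥0∞}
    (hq : q ≠ 0) : eLpNorm F ⊤ Measure.count ≤ eLpNorm F q Measure.count := by
  rw [eLpNorm_exponent_top]
  exact eLpNormEssSup_le_of_ae_enorm_bound (.of_forall fun x => enorm_le_eLpNorm_count F x hq)

theorem eLpNorm_evolution_energy_le (ψ : ℝ → ℝ) (X : ℓ²(V, ℂ) →L[ℂ] ℓ²(V, ℂ)) (f : ℓ²(V, ℂ)) :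
    eLpNorm (fun t : ℝ => (eLpNorm (evolution ψ X t f) 2 Measure.count).toReal) ⊤ volume ≤
      ENNReal.ofReal ‖f‖ := by
  rw [eLpNorm_exponent_top]
  refine eLpNormEssSup_le_of_ae_enorm_bound (.of_forall fun t => ?_)
  rw [eLpNorm_two_count_eq_norm, ENNReal.toReal_ofReal (norm_nonneg _), enorm_norm,
    ← ofReal_norm]
  refine ENNReal.ofReal_le_ofReal ?_
  simpa only [one_mul] using
    ContinuousLinearMap.le_of_opNorm_le _ (norm_evolution_le_one ψ X t) f

variable {G : SimpleGraph V} [G.LocallyFinite] {Q : ℕ} {ψ : ℝ → ℝ} {X : ℓ²(V, ℂ) →L[ℂ] ℓ²(V, ℂ)}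

theorem IsDispersionRelation.exists_eLpNorm_evolution_le (hψ : IsDispersionRelation ψ)
    (hX : IsNormalizedAdjacency G Q X) (hsa : IsSelfAdjoint X) (hG : G.IsTree)
    (hdeg : G.IsRegularOfDegree (Q + 1)) (hQ : 1 < Q) {p q : ℝ≥0∞} (hp : 2 ≤ p) (hq : 2 < q) :
    ∃ C : ℝ, 0 < C ∧ ∀ f : ℓ²(V, ℂ),
      eLpNorm (fun t : ℝ => (eLpNorm (evolution ψ X t f) q Measure.count).toReal) p volume ≤
        ENNReal.ofReal (C * ‖f‖) := by
  obtain ⟨κ, hκ0, hκ⟩ : ∃ κ : ℝ, 0 ≤ κ ∧ ∀ (f : ℓ²(V, ℂ)) (s : ℝ),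
      ∑' j : ℤ, eLpNorm (evolution ψ X (s + j) f) q Measure.count ^ (2 : ℝ) ≤
        ENNReal.ofReal (κ * ‖f‖ ^ 2) := by
    rcases eq_or_ne q ⊤ with rfl | hqt
    · obtain ⟨κ, hκ0, hκ⟩ := hψ.exists_tsum_eLpNorm_evolution_sq_le hX hsa hG hdeg hQ
        (q := 4) (by norm_num) (by norm_num)
      refine ⟨κ, hκ0, fun f s => le_trans (ENNReal.tsum_le_tsum fun j => ?_) (hκ f s)⟩
      gcongr
      exact eLpNorm_top_count_le _ four_ne_zero
    · exact hψ.exists_tsum_eLpNorm_evolution_sq_le hX hsa hG hdeg hQ hq hqt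
  refine ⟨√κ + 1, by positivity, fun f => eLpNorm_toReal_le_of_tsum_rpow_le two_pos (by simpa)
    fun s => (hκ f s).trans ?_⟩
  rw [ENNReal.ofReal_rpow_of_nonneg (by positivity) two_pos.le, Real.rpow_two, mul_pow]
  refine ENNReal.ofReal_le_ofReal (mul_le_mul_of_nonneg_right ?_ (sq_nonneg _))
  nlinarith [Real.sq_sqrt hκ0, Real.sqrt_nonneg κ]

end Strichartz

section Laplacian

open scoped lp

/-- The spectral radius `γ₀ = 2√Q / (Q + 1)` of the simple random walk on the homogeneous tree of
degree `Q + 1`: the Laplacian is `Δ = γ₀ X - 1`, where `X` is the normalized adjacency operator. -/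
noncomputable def treeSpectralRadius (Q : ℕ) : ℝ := 2 * √(Q : ℝ) / (Q + 1)

theorem treeSpectralRadius_mem_Ioo {Q : ℕ} (hQ : 1 < Q) : treeSpectralRadius Q ∈ Set.Ioo 0 1 := by
  have hQ1 : 1 < √(Q : ℝ) := Real.lt_sqrt_of_sq_lt (by simpa using hQ)
  refine ⟨by unfold treeSpectralRadius; positivity, (div_lt_one (by positivity)).2 ?_⟩
  nlinarith [Real.sq_sqrt (Nat.cast_nonneg (α := ℝ) Q)]

variable {γ a : ℝ}

theorem one_sub_mul_pos (hγ : γ ∈ Set.Ioo 0 1) {x : ℝ} (hx : x ∈ Set.Icc (-1) 1) :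
    0 < 1 - γ * x := by
  nlinarith [hγ.1, hγ.2, hx.2]

theorem isDispersionRelation_one_sub_mul_rpow (hγ : γ ∈ Set.Ioo 0 1) (ha : a ≠ 0) :
    IsDispersionRelation fun x => (1 - γ * x) ^ a where
  contDiffAt x hx :=
    ContDiffAt.rpow_const_of_ne (by fun_prop) (one_sub_mul_pos hγ hx).ne'
  deriv_ne_zero x hx := by
    have hpos := one_sub_mul_pos hγ hx
    have hderiv : HasDerivAt (fun x => (1 - γ * x) ^ a) (-γ * a * (1 - γ * x) ^ (a - 1)) x := by
      simpa using (((hasDerivAt_id x).const_mul γ).const_sub 1).rpow_const (Or.inl hpos.ne')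
    rw [hderiv.deriv]
    exact mul_ne_zero (mul_ne_zero (neg_ne_zero.2 hγ.1.ne') ha) (Real.rpow_pos_of_pos hpos _).ne'

open Polynomial in
theorem cfc_exp_cpow_one_sub_smul_eq_evolution {A : Type*} [CStarAlgebra A] {X : A}
    (hsa : IsSelfAdjoint X) (hX : ‖X‖ ≤ 1) (hγ : γ ∈ Set.Ioo 0 1) (a t : ℝ) :
    cfc (fun z : ℂ => Complex.exp (Complex.I * t * z ^ (a : ℂ))) (1 - (γ : ℂ) • X) =
      evolution (fun x => (1 - γ * x) ^ a) X t := by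
  have heval : ∀ z ∈ spectrum ℂ X,
      (1 - C (γ : ℂ) * Polynomial.X).eval z = ((1 - γ * z.re : ℝ) : ℂ) ∧ 0 < 1 - γ * z.re :=
    fun z hz => by
      refine ⟨?_, one_sub_mul_pos hγ (re_mem_Icc_of_mem_spectrum hX hz)⟩
      conv_lhs => rw [hsa.mem_spectrum_eq_re hz]
      simp
  have hcont : ContinuousOn (fun z : ℂ => Complex.exp (Complex.I * t * z ^ (a : ℂ)))
      ((1 - C (γ : ℂ) * Polynomial.X).eval '' spectrum ℂ X) := by
    rintro _ ⟨z, hz, rfl⟩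
    have hslit : (1 - C (γ : ℂ) * Polynomial.X).eval z ∈ Complex.slitPlane := by
      rw [(heval z hz).1]
      exact Complex.ofReal_mem_slitPlane.2 (heval z hz).2
    exact (continuousAt_const.mul
      (continuousAt_id.cpow continuousAt_const hslit)).cexp.continuousWithinAt
  have haeval : aeval X (1 - C (γ : ℂ) * Polynomial.X) = 1 - (γ : ℂ) • X := by
    simp [Algebra.smul_def]
  rw [← haeval, ← cfc_comp_polynomial _ _ X hcont hsa.isStarNormal]
  refine cfc_congr fun z hz => ?_
  rw [(heval z hz).1, ← Complex.ofReal_cpow (heval z hz).2.le, expPhase]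
  congr 1
  push_cast
  ring

variable {V : Type*} {Q : ℕ} {G : SimpleGraph V} [G.LocallyFinite]
  {Δ : ℓ²(V, ℂ) →L[ℂ] ℓ²(V, ℂ)}

theorem isNormalizedAdjacency_inv_smul_one_add (hQ : 0 < Q)
    (hΔ : ∀ f x, Δ f x = ((Q : ℂ) + 1)⁻¹ * (∑ y ∈ G.neighborFinset x, f y) - f x) :
    IsNormalizedAdjacency G Q ((treeSpectralRadius Q : ℂ)⁻¹ • (1 + Δ)) := fun f x => by
  have hsqrt : (√(Q : ℝ) : ℂ) ≠ 0 := by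
    rw [Complex.ofReal_ne_zero]
    positivity
  have hQ1 : (Q : ℂ) + 1 ≠ 0 := Nat.cast_add_one_ne_zero Q
  change (treeSpectralRadius Q : ℂ)⁻¹ * (f x + Δ f x) = _
  rw [hΔ, treeSpectralRadius]
  push_cast
  field_simp
  ring

theorem exists_isNormalizedAdjacency_eq_evolution (hQ : 1 < Q) (hG : G.IsTree)
    (hdeg : G.IsRegularOfDegree (Q + 1))
    (hΔ : ∀ f x, Δ f x = ((Q : ℂ) + 1)⁻¹ * (∑ y ∈ G.neighborFinset x, f y) - f x)
    (hsa : IsSelfAdjoint Δ) (a : ℝ) :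
    ∃ X : ℓ²(V, ℂ) →L[ℂ] ℓ²(V, ℂ), IsNormalizedAdjacency G Q X ∧ IsSelfAdjoint X ∧
      ∀ t : ℝ, cfc (fun z : ℂ => Complex.exp (Complex.I * t * z ^ (a : ℂ))) (-Δ) =
        evolution (fun x => (1 - treeSpectralRadius Q * x) ^ a) X t := by
  have hγ := treeSpectralRadius_mem_Ioo hQ
  have hX := isNormalizedAdjacency_inv_smul_one_add (one_pos.trans hQ) hΔ
  have hXsa : IsSelfAdjoint ((treeSpectralRadius Q : ℂ)⁻¹ • (1 + Δ)) :=
    ((isSelfAdjoint_iff.2 (Complex.conj_ofReal _)).inv₀).smul ((IsSelfAdjoint.one _).add hsa)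
  have hneg : -Δ = 1 - (treeSpectralRadius Q : ℂ) • ((treeSpectralRadius Q : ℂ)⁻¹ • (1 + Δ)) := by
    rw [smul_inv_smul₀ (Complex.ofReal_ne_zero.2 hγ.1.ne'), sub_add_cancel_left]
  refine ⟨_, hX, hXsa, fun t => ?_⟩
  rw [hneg]
  exact cfc_exp_cpow_one_sub_smul_eq_evolution hXsa (hX.norm_le_one hG hdeg (one_pos.trans hQ))
    hγ a t

end Laplacian

theorem stmt19_strichartz_tree_general {V : Type*} [MeasurableSpace V] [DiscreteMeasurableSpace V]
    (Q : ℕ) (hQ : 2 ≤ Q) (G : SimpleGraph V) [∀ v, Fintype (G.neighborSet v)]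
    (htree : G.IsTree) (hdeg : ∀ v : V, G.degree v = Q + 1)
    (Δ : lp (fun _ : V => ℂ) 2 →L[ℂ] lp (fun _ : V => ℂ) 2)
    (hΔ : ∀ (f : lp (fun _ : V => ℂ) 2) (x : V),
      Δ f x = ((Q : ℂ) + 1)⁻¹ * (∑ y ∈ G.neighborFinset x, f y) - f x)
    (hsa : IsSelfAdjoint Δ) (α : ℝ) (hα : α ≠ 0) (p q : ℝ≥0∞)
    (hadm : (1 / p ≤ 1 / 2 ∧ 1 / q < 1 / 2) ∨ (1 / p = 0 ∧ 1 / q = 1 / 2)) :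
    ∃ C : ℝ, 0 < C ∧ ∀ f : lp (fun _ : V => ℂ) 2,
      eLpNorm
          (fun t : ℝ =>
            (eLpNorm
                (fun x : V =>
                  (cfc (fun z : ℂ => Complex.exp (Complex.I * t * z ^ (α / 2 : ℂ))) (-Δ)) f x)
                q Measure.count).toReal)
          p volume
        ≤ ENNReal.ofReal (C * ‖f‖) := by
  obtain ⟨X, hX, hXsa, hcfc⟩ :=
    exists_isNormalizedAdjacency_eq_evolution hQ htree hdeg hΔ hsa (α / 2)
  push_cast at hcfc
  have hψ := isDispersionRelation_one_sub_mul_rpow (treeSpectralRadius_mem_Ioo hQ)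
    (div_ne_zero hα two_ne_zero)
  simp only [hcfc]
  rcases hadm with ⟨hp, hq⟩ | ⟨hp, hq⟩
  · rw [one_div, one_div, ENNReal.inv_le_inv] at hp
    rw [one_div, one_div, ENNReal.inv_lt_inv] at hq
    exact hψ.exists_eLpNorm_evolution_le hX hXsa htree hdeg hQ hp hq
  · obtain rfl : p = ⊤ := by simpa using hp
    obtain rfl : q = 2 := by simpa using hq
    exact ⟨1, one_pos, fun f => by simpa only [one_mul] using eLpNorm_evolution_energy_le _ X f⟩

theorem stmt19_strichartz_tree {V : Type*} [MeasurableSpace V] [DiscreteMeasurableSpace V]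
    (Q : ℕ) (hQ : 2 ≤ Q)
    -- T is a homogeneous tree of degree Q+1, with vertex set V
    (G : SimpleGraph V) [∀ v, Fintype (G.neighborSet v)]
    (htree : G.IsTree) (hdeg : ∀ v : V, G.degree v = Q + 1)
    -- the combinatorial Laplacian, a bounded self-adjoint operator on ℓ²(T)
    (Δ : lp (fun _ : V => ℂ) 2 →L[ℂ] lp (fun _ : V => ℂ) 2)
    (hΔ : ∀ (f : lp (fun _ : V => ℂ) 2) (x : V),
      Δ f x = ((Q : ℂ) + 1)⁻¹ * (∑ y ∈ G.neighborFinset x, f y) - f x)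
    (hsa : IsSelfAdjoint Δ)
    (α : ℝ) (hα0 : 0 < α) (hα2 : α ≤ 2)
    -- (p, q) is an admissible pair: (1/p, 1/q) ∈ [0,1/2] × [0,1/2) ∪ {(0,1/2)}
    (p q : ℝ≥0∞)
    (hadm : (1 / p ≤ 1 / 2 ∧ 1 / q < 1 / 2) ∨ (1 / p = 0 ∧ 1 / q = 1 / 2)) :
    ∃ C : ℝ, 0 < C ∧ ∀ f : lp (fun _ : V => ℂ) 2,
      eLpNorm
          (fun t : ℝ =>
            (eLpNorm
                (fun x : V =>
                  (cfc (fun z : ℂ => Complex.exp (Complex.I * t * z ^ (α / 2 : ℂ))) (-Δ)) f x)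
                q Measure.count).toReal)
          p volume
        ≤ ENNReal.ofReal (C * ‖f‖) :=
  stmt19_strichartz_tree_general Q hQ G htree hdeg Δ hΔ hsa α hα0.ne' p q hadm
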